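/- arXiv:2308.09587 — 3 statements merged into one kernel-verified Lean document; each statement's English description precedes it below -/
import Mathlib

section
/- Let H = K[x]/(x^n) and write d = rn + k with 0 ≤ k < n. Then the variety Rep(H,d) of d×d nilpotent matrices N with N^n = 0 is irreducible, and the orbit of the module N_d := (K[x]/(x^n))^r ⊕ K[x]/(x^k) under conjugation by GL_d(K) is open and dense in Rep(H,d). -/
noncomputable section

open Matrix

variable (K : Type*) [Field K]

/-- The Zariski topology on d×d matrices over K: generated by the basic open sets
D(p) = {N | p(N) ≠ 0} for polynomials p in the matrix entries; its closed sets are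
exactly the zero loci of sets of polynomials. -/
def zariskiMat (d : ℕ) : TopologicalSpace (Matrix (Fin d) (Fin d) K) :=
  TopologicalSpace.generateFrom
    {U | ∃ p : MvPolynomial (Fin d × Fin d) K,
      U = {N | MvPolynomial.eval (fun q => N q.1 q.2) p ≠ 0}}

/-- The nilpotent Jordan block of size n (the x-action on K[x]/(xⁿ)). -/
def jordanBlock (n : ℕ) : Matrix (Fin n) (Fin n) K :=
  Matrix.of fun i j => if (i : ℕ) = (j : ℕ) + 1 then (1 : K) else 0

/-- The matrix of the H-module N_d = (K[x]/(xⁿ))^r ⊕ K[x]/(x^k) (for d = r·n + k):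
r Jordan blocks of size n and one of size k, reindexed to Fin d. -/
def Nmod (d n r k : ℕ) (hd : d = r * n + k) : Matrix (Fin d) (Fin d) K :=
  Matrix.reindex
    ((finProdFinEquiv.sumCongr (Equiv.refl (Fin k))).trans
      (finSumFinEquiv.trans (finCongr hd.symm)))
    ((finProdFinEquiv.sumCongr (Equiv.refl (Fin k))).trans
      (finSumFinEquiv.trans (finCongr hd.symm)))
    (Matrix.fromBlocks
      (Matrix.of fun (p : Fin r × Fin n) (q : Fin r × Fin n) =>
        if p.1 = q.1 then jordanBlock K n p.2 q.2 else 0)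
      0 0 (jordanBlock K k))

/-- levels of the standard flag -/
def flagLev : ℕ → ℕ → ℕ → ℕ
  | 0, _, _ => 0
  | n + 1, d, i => if i < d - d / (n + 1) then flagLev n (d - d / (n + 1)) i else n

theorem flagLev_lt (n d i : ℕ) (hn : 1 ≤ n) : flagLev n d i < n := by
  induction n generalizing d with
  | zero => omega
  | succ n ih =>
    rw [flagLev]
    split_ifs with h
    · rcases Nat.eq_zero_or_pos n with h0 | h0
      · subst h0; simp at h
      · exact (ih _ h0).trans (Nat.lt_succ_self n)
    · exact Nat.lt_succ_self n

section flag
open Module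
variable {F V : Type*} [Field F] [AddCommGroup V] [Module F V] [FiniteDimensional F V]

theorem flag_step (A B : Submodule F V) (h : finrank F A < finrank F B) :
    ∃ x ∈ B, finrank F ↥(A ⊔ Submodule.span F {x}) = finrank F A + 1 := by
  have : ∃ x ∈ B, x ∉ A := by
    by_contra! hc
    have := Submodule.finrank_mono (R := F) (show B ≤ A from hc)
    omega
  obtain ⟨x, hxB, hxA⟩ := this
  refine ⟨x, hxB, ?_⟩
  have hx0 : x ≠ 0 := fun h0 => hxA (h0 ▸ A.zero_mem)
  have h1 := Submodule.finrank_sup_add_finrank_inf_eq A (Submodule.span F {x})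
  have h2 : A ⊓ Submodule.span F {x} = ⊥ := by
    rw [← disjoint_iff]
    exact (Submodule.disjoint_span_singleton' hx0).2 hxA
  rw [h2, finrank_bot, finrank_span_singleton hx0] at h1
  omega

theorem flag_interp (m s : ℕ) (A B : Submodule F V) (hAB : A ≤ B)
    (hs : finrank F A + s = m) (h2 : m ≤ finrank F B) :
    ∃ W, A ≤ W ∧ W ≤ B ∧ finrank F W = m := by
  induction s generalizing A with
  | zero => exact ⟨A, le_rfl, hAB, by omega⟩
  | succ s ih =>
    obtain ⟨x, hx, h⟩ := flag_step A B (by omega)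
    obtain ⟨W, h3, h4, h5⟩ := ih (A ⊔ Submodule.span F {x})
      (sup_le hAB (by simpa using hx)) (by omega)
    exact ⟨W, le_sup_left.trans h3, h4, h5⟩

theorem flag_ext (d s r : ℕ) (A B : Submodule F V) (hAB : A ≤ B)
    (hr : finrank F A + r = finrank F B) (b : ℕ → V) (hd : s + r = d)
    (hb : Submodule.span F (b '' Set.Iio s) = A) :
    ∃ b' : ℕ → V, (∀ i < s, b' i = b i) ∧ Submodule.span F (b' '' Set.Iio d) = B := by
  induction r generalizing A s b with
  | zero =>
    refine ⟨b, fun _ _ => rfl, ?_⟩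
    rw [← hd, add_zero, hb]
    exact Submodule.eq_of_le_of_finrank_eq hAB (by omega)
  | succ r ih =>
    obtain ⟨x, hx, h⟩ := flag_step A B (by omega)
    obtain ⟨b', h1, h2⟩ := ih (s + 1) (A ⊔ Submodule.span F {x})
      (sup_le hAB (by simpa using hx)) (by omega) (Function.update b s x) (by omega) (by
        have : Set.Iio (s + 1) = Set.Iio s ∪ {s} := by
          ext i; simp
        rw [this, Set.image_union, Submodule.span_union, ← hb]
        congr 2
        · apply Set.image_congr
          intro i hi
          rw [Function.update_of_ne (ne_of_lt hi)]
        · simp)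
    refine ⟨b', fun i hi => ?_, h2⟩
    rw [h1 i (by omega), Function.update_of_ne (by omega)]

theorem finrank_map_add (f : V →ₗ[F] V) (W : Submodule F V) :
    finrank F (W.map f) + finrank F ↥(W ⊓ LinearMap.ker f) = finrank F W := by
  have h := LinearMap.finrank_range_add_finrank_ker (f.domRestrict W)
  rw [LinearMap.range_domRestrict, LinearMap.ker_domRestrict] at h
  rw [← h]
  congr 1
  rw [← Submodule.finrank_map_subtype_eq, Submodule.map_comap_subtype]

theorem flag_dims (f : End F V) (n r : ℕ) (W : Submodule F V) (hW : W.map f ≤ W)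
    (hf : ∀ x ∈ W, (f ^ (n + 1)) x = 0) (hr : r = finrank F W / (n + 1)) :
    finrank F (W.map f) ≤ finrank F W - r ∧
    finrank F W - r ≤ finrank F ↥(W ⊓ LinearMap.ker (f ^ n)) := by
  obtain ⟨a, ha⟩ : ∃ a : ℕ → ℕ, ∀ i, a i = finrank F (W.map (f ^ i)) := ⟨_, fun _ => rfl⟩
  obtain ⟨δ, hδ⟩ : ∃ δ : ℕ → ℕ, ∀ i, δ i = finrank F ↥(W.map (f ^ i) ⊓ LinearMap.ker f) :=
    ⟨_, fun _ => rfl⟩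
  have hmap : ∀ i, W.map (f ^ (i + 1)) = (W.map (f ^ i)).map f := by
    intro i; rw [pow_succ', Module.End.mul_eq_comp, Submodule.map_comp]
  have hmap' : ∀ i, W.map (f ^ (i + 1)) = (W.map f).map (f ^ i) := by
    intro i; rw [pow_succ, Module.End.mul_eq_comp, Submodule.map_comp]
  have h1 : ∀ i, a (i + 1) + δ i = a i := by
    intro i; rw [ha, ha, hδ, hmap]; exact finrank_map_add f _
  have h2 : Antitone δ := antitone_nat_of_succ_le fun i => by
    rw [hδ, hδ]
    apply Submodule.finrank_mono
    apply inf_le_inf_right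
    rw [hmap']
    exact Submodule.map_mono hW
  have h3 : ∀ i, a i + ∑ j ∈ Finset.range i, δ j = a 0 := by
    intro i
    induction i with
    | zero => simp
    | succ i ih => rw [Finset.sum_range_succ, ← ih, ← h1 i]; ring
  have h0 : a 0 = finrank F W := by rw [ha, pow_zero, Module.End.one_eq_id, Submodule.map_id]
  have hn1 : a (n + 1) = 0 := by
    have : W.map (f ^ (n + 1)) = ⊥ := by
      rw [eq_bot_iff]; rintro _ ⟨x, hx, rfl⟩; simpa using hf x hx
    rw [ha, this, finrank_bot]
  have h4 := h3 (n + 1)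
  rw [hn1, h0, zero_add] at h4
  have h5 : (n + 1) * δ n ≤ finrank F W := by
    rw [← h4]
    have := Finset.card_nsmul_le_sum (Finset.range (n + 1)) δ (δ n)
      (fun i hi => h2 (by simpa using Nat.lt_succ_iff.1 (Finset.mem_range.1 hi)))
    simpa using this
  have h6 : finrank F W ≤ (n + 1) * δ 0 := by
    rw [← h4]
    have := Finset.sum_le_card_nsmul (Finset.range (n + 1)) δ (δ 0)
      (fun i hi => h2 (Nat.zero_le i))
    simpa using this
  have h7 : δ n ≤ r := by
    rw [hr, Nat.le_div_iff_mul_le (by omega)]; linarith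
  have h8 : r ≤ δ 0 := by
    rw [hr]
    calc _ ≤ (n + 1) * δ 0 / (n + 1) := Nat.div_le_div_right h6
      _ = _ := by simp
  have h9 := h1 0
  have h10 := h1 n
  have h11 := finrank_map_add (f ^ n) W
  have h12 : a (0 + 1) = finrank F (W.map f) := by rw [ha, zero_add, pow_one]
  have h13 : a n = finrank F (W.map (f ^ n)) := ha n
  omega

theorem flag_main (f : End F V) (n d : ℕ) (W : Submodule F V) (hW : W.map f ≤ W)
    (hf : ∀ x ∈ W, (f ^ n) x = 0) (hd : finrank F W = d) :
    ∃ b : ℕ → V, Submodule.span F (b '' Set.Iio d) = W ∧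
      ∀ j < d, f (b j) ∈ Submodule.span F (b '' {i | i < d ∧ flagLev n d i < flagLev n d j}) := by
  induction n generalizing d W with
  | zero =>
    have : W = ⊥ := by
      rw [eq_bot_iff]; intro x hx; simpa using hf x hx
    subst this
    rw [finrank_bot] at hd
    subst hd
    exact ⟨fun _ => 0, by simp, by simp⟩
  | succ n ih =>
    set r := d / (n + 1) with hr
    obtain ⟨h1, h2⟩ := flag_dims f n r W hW hf (by rw [hd])
    have hrd : r ≤ d := Nat.div_le_self _ _
    rw [hd] at h1 h2
    obtain ⟨W', h3, h4, h5⟩ := flag_interp (d - r) (d - r - finrank F (W.map f)) (W.map f)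
      (W ⊓ LinearMap.ker (f ^ n)) (le_inf hW (by
        rintro _ ⟨x, hx, rfl⟩
        have := hf x hx
        rwa [pow_succ, Module.End.mul_apply] at this)) (by omega) h2
    obtain ⟨b, h6, h7⟩ := ih (d - r) W' ((Submodule.map_mono (h4.trans inf_le_left)).trans h3)
      (fun x hx => (h4 hx).2) h5
    obtain ⟨b', h8, h9⟩ := flag_ext d (d - r) r W' W (h4.trans inf_le_left) (by omega) b
      (by omega) h6
    have hlev : ∀ i < d - r, flagLev (n + 1) d i = flagLev n (d - r) i := by
      intro i hi; rw [flagLev, if_pos hi]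
    refine ⟨b', h9, fun j hj => ?_⟩
    by_cases hjd : j < d - r
    · rw [h8 j hjd]
      refine Submodule.span_mono ?_ (h7 j hjd)
      rintro _ ⟨i, ⟨hi, hi'⟩, rfl⟩
      exact ⟨i, ⟨lt_of_lt_of_le hi (Nat.sub_le _ _), by rw [hlev i hi, hlev j hjd]; exact hi'⟩, h8 i hi⟩
    · have h10 : f (b' j) ∈ W' := h3 ⟨b' j, by
        rw [← h9]; exact Submodule.subset_span ⟨j, hj, rfl⟩, rfl⟩
      rw [← h6] at h10
      refine Submodule.span_mono ?_ h10
      rintro _ ⟨i, hi, rfl⟩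
      have hi : i < d - r := hi
      refine ⟨i, ⟨lt_of_lt_of_le hi (Nat.sub_le _ _), ?_⟩, h8 i hi⟩
      rw [hlev i hi, flagLev, if_neg hjd]
      apply flagLev_lt
      rcases Nat.eq_zero_or_pos n with h0 | h0
      · subst h0; simp [hr] at hi
      · exact h0
end flag

section conj
variable {F : Type*} [Field F] {d : ℕ}

/-- matrices that lower the level -/
def LowersLev (n d : ℕ) (X : Matrix (Fin d) (Fin d) F) : Prop :=
  ∀ i j : Fin d, flagLev n d j ≤ flagLev n d i → X i j = 0

theorem isUnit_of_span (b : Fin d → Fin d → F) (hb : ⊤ ≤ Submodule.span F (Set.range b)) :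
    IsUnit (Matrix.of fun i j => b j i) := by
  have h := linearIndependent_of_top_le_span_of_card_eq_finrank hb (by simp)
  exact Matrix.linearIndependent_cols_iff_isUnit.1 h

theorem exists_conj (n : ℕ) (N : Matrix (Fin d) (Fin d) F) (hN : N ^ n = 0) :
    ∃ g X : Matrix (Fin d) (Fin d) F, LowersLev n d X ∧ N = g * X * g.adjugate := by
  obtain ⟨b, h1, h2⟩ := flag_main (Matrix.toLin' N) n d ⊤ le_top
    (fun x _ => by rw [← Matrix.toLin'_pow, hN]; simp) (by simp)
  set B : Matrix (Fin d) (Fin d) F := Matrix.of fun i j => b j i with hB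
  have hBu : IsUnit B := by
    apply isUnit_of_span (fun j : Fin d => b j)
    rw [← h1]
    apply Submodule.span_mono
    rintro _ ⟨i, hi, rfl⟩
    exact ⟨⟨i, hi⟩, rfl⟩
  have hdet : IsUnit B.det := (Matrix.isUnit_iff_isUnit_det B).1 hBu
  have hsingle : ∀ j : Fin d, B⁻¹ *ᵥ (b j) = Pi.single j 1 := by
    intro j
    have : b j = B *ᵥ Pi.single j 1 := by
      rw [Matrix.mulVec_single_one]; rfl
    rw [this, Matrix.mulVec_mulVec, Matrix.nonsing_inv_mul B hdet, Matrix.one_mulVec]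
  have key : ∀ (S : Set ℕ) (y : Fin d → F), S ⊆ Set.Iio d → y ∈ Submodule.span F (b '' S) →
      ∀ i : Fin d, (i : ℕ) ∉ S → (B⁻¹ *ᵥ y) i = 0 := by
    intro S y hS hy i hi
    induction hy using Submodule.span_induction with
    | mem x hx =>
      obtain ⟨j, hj, rfl⟩ := hx
      have := hsingle ⟨j, hS hj⟩
      simp only at this
      rw [this, Pi.single_eq_of_ne]
      rintro rfl
      exact hi hj
    | zero => simp
    | add x y _ _ hx hy => rw [Matrix.mulVec_add, Pi.add_apply, hx, hy, add_zero]
    | smul c x _ hx => rw [Matrix.mulVec_smul, Pi.smul_apply, hx, smul_zero]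
  refine ⟨B, (B.det)⁻¹ • (B⁻¹ * N * B), ?_, ?_⟩
  · intro i j hij
    rw [Matrix.smul_apply]
    have : (B⁻¹ * N * B) i j = (B⁻¹ *ᵥ (N *ᵥ b j)) i := by
      rw [Matrix.mulVec_mulVec]; rfl
    have h3 : N *ᵥ b j ∈ Submodule.span F
        (b '' {i | i < d ∧ flagLev n d i < flagLev n d j}) := h2 j j.2
    rw [this, key _ _ (fun i hi => hi.1) h3 i (fun h => absurd h.2 (not_lt.2 hij)),
      smul_zero]
  · rw [Matrix.mul_smul, Matrix.smul_mul, ← Matrix.mul_smul]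
    have : (B.det)⁻¹ • B.adjugate = B⁻¹ := by
      rw [Matrix.inv_def, Ring.inverse_eq_inv']
    rw [this, Matrix.mul_assoc, Matrix.mul_assoc, Matrix.mul_nonsing_inv B hdet, Matrix.mul_one,
      ← Matrix.mul_assoc, Matrix.mul_nonsing_inv B hdet, Matrix.one_mul]

theorem LowersLev.pow_apply {n : ℕ} {X : Matrix (Fin d) (Fin d) F} (hX : LowersLev n d X) (m : ℕ)
    (i j : Fin d) (h : flagLev n d j < flagLev n d i + m) : (X ^ m) i j = 0 := by
  induction m generalizing j with
  | zero =>
    rw [pow_zero, Matrix.one_apply_ne]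
    rintro rfl
    omega
  | succ m ih =>
    rw [pow_succ, Matrix.mul_apply]
    apply Finset.sum_eq_zero
    intro l _
    by_cases hl : flagLev n d l < flagLev n d i + m
    · rw [ih l hl, zero_mul]
    · rw [hX l j (by omega), mul_zero]

theorem LowersLev.pow_eq_zero {n : ℕ} (hn : 1 ≤ n) {X : Matrix (Fin d) (Fin d) F}
    (hX : LowersLev n d X) : X ^ n = 0 := by
  ext i j
  exact hX.pow_apply n i j (by have := flagLev_lt n d j hn; omega)

theorem adj_conj_pow (g X : Matrix (Fin d) (Fin d) F) (m : ℕ) :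
    (g * X * g.adjugate) ^ (m + 1) = g.det ^ m • (g * X ^ (m + 1) * g.adjugate) := by
  induction m with
  | zero => simp
  | succ m ih =>
    rw [pow_succ, ih]
    have : g * X ^ (m + 1) * g.adjugate * (g * X * g.adjugate) =
        g * X ^ (m + 1) * (g.adjugate * g) * X * g.adjugate := by
      simp only [Matrix.mul_assoc]
    rw [Matrix.smul_mul, this, Matrix.adjugate_mul, Matrix.mul_smul, Matrix.smul_mul,
      Matrix.smul_mul, smul_smul, Matrix.mul_one, pow_succ X (m + 1), Matrix.mul_assoc g (X ^ (m+1)),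
      pow_succ g.det m]

open Polynomial in
theorem exists_path (n : ℕ) (hn : 1 ≤ n) (N₁ N₂ : Matrix (Fin d) (Fin d) F)
    (h₁ : N₁ ^ n = 0) (h₂ : N₂ ^ n = 0) :
    ∃ P : Matrix (Fin d) (Fin d) F[X], (∀ t, ((evalRingHom t).mapMatrix P) ^ n = 0) ∧
      (evalRingHom 0).mapMatrix P = N₁ ∧ (evalRingHom 1).mapMatrix P = N₂ := by
  obtain ⟨g₁, X₁, hX₁, rfl⟩ := exists_conj n N₁ h₁
  obtain ⟨g₂, X₂, hX₂, rfl⟩ := exists_conj n N₂ h₂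
  let L : Matrix (Fin d) (Fin d) F → Matrix (Fin d) (Fin d) F → Matrix (Fin d) (Fin d) F[X] :=
    fun a b => Matrix.of fun i j => C (a i j) + Polynomial.X * C (b i j - a i j)
  have hL : ∀ a b t, (evalRingHom t).mapMatrix (L a b) = a + t • (b - a) := by
    intro a b t; ext i j; simp [L]
  have hP : ∀ t, (evalRingHom t).mapMatrix (L g₁ g₂ * L X₁ X₂ * (L g₁ g₂).adjugate) =
      (g₁ + t • (g₂ - g₁)) * (X₁ + t • (X₂ - X₁)) * (g₁ + t • (g₂ - g₁)).adjugate := by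
    intro t
    rw [map_mul, map_mul, RingHom.map_adjugate, hL, hL]
  refine ⟨L g₁ g₂ * L X₁ X₂ * (L g₁ g₂).adjugate, fun t => ?_, ?_, ?_⟩
  · rw [hP]
    obtain ⟨m, rfl⟩ : ∃ m, n = m + 1 := ⟨n - 1, by omega⟩
    rw [adj_conj_pow]
    have : LowersLev (m + 1) d (X₁ + t • (X₂ - X₁)) := by
      intro i j hij
      simp [hX₁ i j hij, hX₂ i j hij]
    rw [this.pow_eq_zero hn]
    simp
  · rw [hP]; simp
  · rw [hP]; simp

theorem exists_basic (U : Set (Matrix (Fin d) (Fin d) F)) (hU : @IsOpen _ (zariskiMat F d) U)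
    (N : Matrix (Fin d) (Fin d) F) (hN : N ∈ U) :
    ∃ p : MvPolynomial (Fin d × Fin d) F, MvPolynomial.eval (fun q => N q.1 q.2) p ≠ 0 ∧
      ∀ M : Matrix (Fin d) (Fin d) F, MvPolynomial.eval (fun q => M q.1 q.2) p ≠ 0 → M ∈ U := by
  change TopologicalSpace.GenerateOpen _ U at hU
  induction hU with
  | basic s hs =>
    obtain ⟨p, rfl⟩ := hs
    exact ⟨p, hN, fun _ h => h⟩
  | univ => exact ⟨1, by simp, by simp⟩
  | inter s t _ _ hs ht =>
    obtain ⟨p, hp, hp'⟩ := hs hN.1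
    obtain ⟨q, hq, hq'⟩ := ht hN.2
    refine ⟨p * q, by simp [hp, hq], fun M hM => ?_⟩
    rw [map_mul] at hM
    exact ⟨hp' M (left_ne_zero_of_mul hM), hq' M (right_ne_zero_of_mul hM)⟩
  | sUnion S _ ih =>
    obtain ⟨s, hs, hNs⟩ := hN
    obtain ⟨p, hp, hp'⟩ := ih s hs hNs
    exact ⟨p, hp, fun M hM => ⟨s, hs, hp' M hM⟩⟩

theorem rep_irreducible [Infinite F] (n : ℕ) (hn : 1 ≤ n) :
    letI := zariskiMat F d
    IsIrreducible {N : Matrix (Fin d) (Fin d) F | N ^ n = 0} := by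
  letI := zariskiMat F d
  refine ⟨⟨0, by simp only [Set.mem_setOf_eq]; exact zero_pow (by omega)⟩, ?_⟩
  rintro U V hU hV ⟨N₁, hN₁, hU₁⟩ ⟨N₂, hN₂, hV₂⟩
  obtain ⟨p, hp, hp'⟩ := exists_basic U hU N₁ hU₁
  obtain ⟨q, hq, hq'⟩ := exists_basic V hV N₂ hV₂
  obtain ⟨P, hP, hP0, hP1⟩ := exists_path n hn N₁ N₂ hN₁ hN₂
  have hev : ∀ (p : MvPolynomial (Fin d × Fin d) F) (t : F),
      (MvPolynomial.aeval (fun q : Fin d × Fin d => P q.1 q.2) p).eval t =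
      MvPolynomial.eval (fun q => ((Polynomial.evalRingHom t).mapMatrix P) q.1 q.2) p := by
    intro p t
    induction p using MvPolynomial.induction_on with
    | C a => simp
    | add p q hp hq => simp only [map_add, Polynomial.eval_add, hp, hq]
    | mul_X p i hp =>
      simp only [map_mul, Polynomial.eval_mul, hp, MvPolynomial.aeval_X, MvPolynomial.eval_X]
      rfl
  set φ := MvPolynomial.aeval (fun q : Fin d × Fin d => P q.1 q.2) p
  set ψ := MvPolynomial.aeval (fun q : Fin d × Fin d => P q.1 q.2) q
  have hφ : φ ≠ 0 := by
    intro h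
    apply hp
    rw [← hP0, ← hev]
    change φ.eval 0 = 0
    rw [h, Polynomial.eval_zero]
  have hψ : ψ ≠ 0 := by
    intro h
    apply hq
    rw [← hP1, ← hev]
    change ψ.eval 1 = 0
    rw [h, Polynomial.eval_zero]
  obtain ⟨t, ht⟩ : ∃ t, (φ * ψ).eval t ≠ 0 := by
    by_contra! hc
    exact mul_ne_zero hφ hψ (Polynomial.funext (by simpa using hc))
  rw [Polynomial.eval_mul] at ht
  refine ⟨(Polynomial.evalRingHom t).mapMatrix P, hP t, hp' _ ?_, hq' _ ?_⟩
  · rw [← hev]; exact left_ne_zero_of_mul ht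
  · rw [← hev]; exact right_ne_zero_of_mul ht

end conj

section orbit
variable {R : Type*} [CommRing R] {d n r k : ℕ}

/-- the vectors `N ^ i v_j` and `N ^ i w` -/
def chainVec (n k : ℕ) (N : Matrix (Fin d) (Fin d) R) (v : Fin r → Fin d → R) (w : Fin d → R) :
    (Fin r × Fin n) ⊕ Fin k → Fin d → R :=
  Sum.elim (fun p => (N ^ (p.2 : ℕ)) *ᵥ v p.1) (fun i => (N ^ (i : ℕ)) *ᵥ w)

/-- the bijection used in `Nmod` -/
def chainEquiv (hd : d = r * n + k) : (Fin r × Fin n) ⊕ Fin k ≃ Fin d :=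
  (finProdFinEquiv.sumCongr (Equiv.refl (Fin k))).trans
      (finSumFinEquiv.trans (finCongr hd.symm))

/-- the matrix whose columns are the chain vectors -/
def chainMat (hd : d = r * n + k) (N : Matrix (Fin d) (Fin d) R) (v : Fin r → Fin d → R)
    (w : Fin d → R) : Matrix (Fin d) (Fin d) R :=
  Matrix.of fun i j => chainVec n k N v w ((chainEquiv hd).symm j) i

theorem chainMat_mulVec (hd : d = r * n + k) (N : Matrix (Fin d) (Fin d) R)
    (v : Fin r → Fin d → R) (w : Fin d → R) (s) :
    chainMat hd N v w *ᵥ Pi.single (chainEquiv hd s) 1 = chainVec n k N v w s := by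
  rw [Matrix.mulVec_single_one]
  ext i
  simp [chainMat]

theorem chain_open {F : Type*} [Field F] (hd : d = r * n + k) (v : Fin r → Fin d → F)
    (w : Fin d → F) :
    @IsOpen _ (zariskiMat F d) {N | (chainMat hd N v w).det ≠ 0} := by
  apply TopologicalSpace.isOpen_generateFrom_of_mem
  refine ⟨(chainMat hd (Matrix.mvPolynomialX (Fin d) (Fin d) F)
    (fun j i => MvPolynomial.C (v j i)) (fun i => MvPolynomial.C (w i))).det, ?_⟩
  ext N
  simp only [Set.mem_setOf_eq]
  rw [RingHom.map_det]
  have key : ∀ (m : ℕ) (x : Fin d → F) (i : Fin d), MvPolynomial.eval (fun q => N q.1 q.2)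
      (((Matrix.mvPolynomialX (Fin d) (Fin d) F) ^ m *ᵥ fun i => MvPolynomial.C (x i)) i) =
      (N ^ m *ᵥ x) i := by
    intro m x i
    rw [RingHom.map_mulVec]
    congr 1
    · have := map_pow (MvPolynomial.eval (fun q : Fin d × Fin d => N q.1 q.2)).mapMatrix
        (Matrix.mvPolynomialX (Fin d) (Fin d) F) m
      rw [Matrix.mvPolynomialX_mapMatrix_eval] at this
      rw [RingHom.mapMatrix_apply] at this
      rw [this]
    · ext i
      simp
  have : (MvPolynomial.eval (fun q : Fin d × Fin d => N q.1 q.2)).mapMatrix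
      (chainMat hd (Matrix.mvPolynomialX (Fin d) (Fin d) F)
    (fun j i => MvPolynomial.C (v j i)) (fun i => MvPolynomial.C (w i))) = chainMat hd N v w := by
    ext i j
    simp only [RingHom.mapMatrix_apply, Matrix.map_apply, chainMat, Matrix.of_apply]
    rcases (chainEquiv hd).symm j with p | l
    · exact key _ _ _
    · exact key _ _ _
  rw [this]

theorem Nmod_inl {F : Type*} [Field F] (hd : d = r * n + k) (j : Fin r) (i : Fin n) :
    Nmod F d n r k hd *ᵥ Pi.single (chainEquiv hd (Sum.inl (j, i))) 1 =
      if h : (i : ℕ) + 1 < n then Pi.single (chainEquiv hd (Sum.inl (j, ⟨i + 1, h⟩))) 1 else 0 := by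
  rw [Matrix.mulVec_single_one]
  ext l
  obtain ⟨s, rfl⟩ := (chainEquiv hd).surjective l
  have h0 : Nmod F d n r k hd (chainEquiv hd s) (chainEquiv hd (Sum.inl (j, i))) =
    (Matrix.fromBlocks
      (Matrix.of fun (p : Fin r × Fin n) (q : Fin r × Fin n) =>
        if p.1 = q.1 then jordanBlock F n p.2 q.2 else 0)
      0 0 (jordanBlock F k)) s (Sum.inl (j, i)) := by
    change (Matrix.reindex (chainEquiv hd) (chainEquiv hd) _) _ _ = _
    simp
  rw [Matrix.col_apply, h0]
  rcases s with ⟨j', i'⟩ | s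
  · have hi' := i'.2
    split_ifs with h
    · simp only [fromBlocks_apply₁₁, of_apply, jordanBlock, Pi.single_apply,
        EmbeddingLike.apply_eq_iff_eq, Sum.inl.injEq, Prod.mk.injEq, Fin.ext_iff]
      split_ifs <;> first | rfl | (exfalso; omega)
    · simp only [fromBlocks_apply₁₁, of_apply, jordanBlock, Pi.zero_apply]
      split_ifs <;> first | rfl | (exfalso; omega)
  · split_ifs with h <;> simp [Pi.single_apply]

theorem Nmod_inr {F : Type*} [Field F] (hd : d = r * n + k) (i : Fin k) :
    Nmod F d n r k hd *ᵥ Pi.single (chainEquiv hd (Sum.inr i)) 1 =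
      if h : (i : ℕ) + 1 < k then Pi.single (chainEquiv hd (Sum.inr ⟨i + 1, h⟩)) 1 else 0 := by
  rw [Matrix.mulVec_single_one]
  ext l
  obtain ⟨s, rfl⟩ := (chainEquiv hd).surjective l
  have h0 : Nmod F d n r k hd (chainEquiv hd s) (chainEquiv hd (Sum.inr i)) =
    (Matrix.fromBlocks
      (Matrix.of fun (p : Fin r × Fin n) (q : Fin r × Fin n) =>
        if p.1 = q.1 then jordanBlock F n p.2 q.2 else 0)
      0 0 (jordanBlock F k)) s (Sum.inr i) := by
    change (Matrix.reindex (chainEquiv hd) (chainEquiv hd) _) _ _ = _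
    simp
  rw [Matrix.col_apply, h0]
  rcases s with s | i'
  · split_ifs with h <;> simp [Pi.single_apply]
  · have hi' := i'.2
    split_ifs with h
    · simp only [fromBlocks_apply₂₂, of_apply, jordanBlock, Pi.single_apply,
        EmbeddingLike.apply_eq_iff_eq, Sum.inr.injEq, Fin.ext_iff]
    · simp only [fromBlocks_apply₂₂, of_apply, jordanBlock, Pi.zero_apply]
      split_ifs <;> first | rfl | (exfalso; omega)

theorem Nmod_pow_inl {F : Type*} [Field F] (hd : d = r * n + k) (j : Fin r) (i : ℕ) (hi : i < n) :
    Nmod F d n r k hd ^ i *ᵥ Pi.single (chainEquiv hd (Sum.inl (j, ⟨0, by omega⟩))) 1 =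
      Pi.single (chainEquiv hd (Sum.inl (j, ⟨i, hi⟩))) 1 := by
  induction i with
  | zero => rw [pow_zero, Matrix.one_mulVec]
  | succ i ih =>
    rw [pow_succ', ← Matrix.mulVec_mulVec, ih (by omega), Nmod_inl, dif_pos hi]

theorem Nmod_pow_inr {F : Type*} [Field F] (hd : d = r * n + k) (i : ℕ) (hi : i < k) :
    Nmod F d n r k hd ^ i *ᵥ Pi.single (chainEquiv hd (Sum.inr ⟨0, by omega⟩)) 1 =
      Pi.single (chainEquiv hd (Sum.inr ⟨i, hi⟩)) 1 := by
  induction i with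
  | zero => rw [pow_zero, Matrix.one_mulVec]
  | succ i ih =>
    rw [pow_succ', ← Matrix.mulVec_mulVec, ih (by omega), Nmod_inr, dif_pos hi]

theorem Nmod_pow {F : Type*} [Field F] (hd : d = r * n + k) (hk : k < n) :
    Nmod F d n r k hd ^ n = 0 := by
  have hinl : ∀ (m : ℕ) (j : Fin r) (i : Fin n), n ≤ i + m →
      Nmod F d n r k hd ^ m *ᵥ Pi.single (chainEquiv hd (Sum.inl (j, i))) 1 = 0 := by
    intro m
    induction m with
    | zero => intro j i h; have := i.2; omega
    | succ m ih =>
      intro j i h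
      rw [pow_succ, ← Matrix.mulVec_mulVec, Nmod_inl]
      split_ifs with h1
      · exact ih _ _ (by simp only; omega)
      · simp
  have hinr : ∀ (m : ℕ) (i : Fin k), k ≤ i + m →
      Nmod F d n r k hd ^ m *ᵥ Pi.single (chainEquiv hd (Sum.inr i)) 1 = 0 := by
    intro m
    induction m with
    | zero => intro i h; have := i.2; omega
    | succ m ih =>
      intro i h
      rw [pow_succ, ← Matrix.mulVec_mulVec, Nmod_inr]
      split_ifs with h1
      · exact ih _ (by simp only; omega)
      · simp
  apply Matrix.ext_of_mulVec_single
  intro l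
  obtain ⟨s, rfl⟩ := (chainEquiv hd).surjective l
  rw [Matrix.zero_mulVec]
  rcases s with ⟨j, i⟩ | i
  · exact hinl _ _ _ (by omega)
  · exact hinr _ _ (by omega)

theorem fix_w {F : Type*} [Field F] (hd : d = r * n + k) (hk : k < n)
    (N : Matrix (Fin d) (Fin d) F) (hN : N ^ n = 0) (v : Fin r → Fin d → F) (w : Fin d → F)
    (hs : ⊤ ≤ Submodule.span F (Set.range (chainVec n k N v w))) :
    ∃ w', N ^ k *ᵥ w' = 0 ∧ ⊤ ≤ Submodule.span F (Set.range (chainVec n k N v w')) := by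
  have hli : LinearIndependent F (chainVec n k N v w) :=
    linearIndependent_of_top_le_span_of_card_eq_finrank hs (by simp [hd])
  set b : Fin r × Fin n → Fin d → F := fun p => (N ^ (p.2 : ℕ)) *ᵥ v p.1 with hb
  have hbli : LinearIndependent F b := hli.comp Sum.inl Sum.inl_injective
  set W := Submodule.span F (Set.range b) with hW
  have hNn : ∀ (m : ℕ) (x : Fin d → F), n ≤ m → N ^ m *ᵥ x = 0 := by
    intro m x h
    rw [pow_eq_zero_of_le h hN, Matrix.zero_mulVec]
  have hbW : ∀ (m : ℕ) (j : Fin r), N ^ m *ᵥ v j ∈ W := by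
    intro m j
    by_cases hm : m < n
    · exact Submodule.subset_span ⟨(j, ⟨m, hm⟩), rfl⟩
    · rw [hNn m _ (by omega)]; exact W.zero_mem
  have hWm : ∀ (m : ℕ) (x : Fin d → F), x ∈ W → N ^ m *ᵥ x ∈ W := by
    intro m x hx
    induction hx using Submodule.span_induction with
    | mem x hx =>
      obtain ⟨p, rfl⟩ := hx
      simp only [hb]
      rw [Matrix.mulVec_mulVec, ← pow_add]
      exact hbW _ _
    | zero => simp
    | add x y _ _ hx hy => rw [Matrix.mulVec_add]; exact W.add_mem hx hy
    | smul c x _ hx => rw [Matrix.mulVec_smul]; exact W.smul_mem c hx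
  have hfr : Module.finrank F W = r * n := by
    rw [hW, finrank_span_eq_card hbli]; simp
  have hq : Module.finrank F ((Fin d → F) ⧸ W) = k := by
    have := Submodule.finrank_quotient_add_finrank W
    rw [hfr, Module.finrank_fin_fun] at this
    omega
  have hinv : W ≤ W.comap (Matrix.toLin' N) := by
    intro x hx
    have := hWm 1 x hx
    rw [pow_one] at this
    exact this
  have hkW : ∀ x : Fin d → F, N ^ k *ᵥ x ∈ W := by
    intro x
    have hp : ∀ m : ℕ, ((W.mapQ W (Matrix.toLin' N) hinv) ^ m) (W.mkQ x) =
        W.mkQ (N ^ m *ᵥ x) := by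
      intro m
      induction m with
      | zero => simp
      | succ m ih =>
        rw [pow_succ', Module.End.mul_apply, ih, pow_succ' N, ← Matrix.mulVec_mulVec]
        rfl
    have h1 : W.mkQ x ∈ LinearMap.ker ((W.mapQ W (Matrix.toLin' N) hinv) ^ n) := by
      rw [LinearMap.mem_ker, hp, hN]; simp
    have h2 := Module.End.ker_pow_le_ker_pow_finrank _ _ h1
    rw [LinearMap.mem_ker, hq, hp] at h2
    simpa using h2
  obtain ⟨c, hc⟩ := (Submodule.mem_span_range_iff_exists_fun F).1 (hkW w)
  have hc0 : ∀ p : Fin r × Fin n, (p.2 : ℕ) < k → c p = 0 := by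
    have h1 : ∑ p, c p • (N ^ ((p.2 : ℕ) + (n - k)) *ᵥ v p.1) = 0 := by
      have h2 : N ^ (n - k) *ᵥ (N ^ k *ᵥ w) = 0 := by
        rw [Matrix.mulVec_mulVec, ← pow_add]; exact hNn _ _ (by omega)
      rw [← hc, Matrix.mulVec_sum] at h2
      rw [← h2]
      apply Finset.sum_congr rfl
      intro p _
      simp only [hb]
      rw [Matrix.mulVec_smul, Matrix.mulVec_mulVec, ← pow_add, add_comm]
    rw [← Fintype.sum_subtype_add_sum_subtype (fun p : Fin r × Fin n => (p.2 : ℕ) < k)] at h1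
    have h3 : ∑ p : {p : Fin r × Fin n // ¬ (p.2 : ℕ) < k},
        c p • (N ^ ((p.1.2 : ℕ) + (n - k)) *ᵥ v p.1.1) = 0 := by
      apply Finset.sum_eq_zero
      rintro ⟨p, hp⟩ _
      rw [hNn _ _ (by simp only; omega), smul_zero]
    rw [h3, add_zero] at h1
    let ι : {p : Fin r × Fin n // (p.2 : ℕ) < k} → Fin r × Fin n :=
      fun p => (p.1.1, ⟨p.1.2 + (n - k), by have := p.2; omega⟩)
    have hι : Function.Injective ι := by
      rintro ⟨⟨a, b⟩, h⟩ ⟨⟨a', b'⟩, h'⟩ hh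
      simp only [ι, Prod.mk.injEq, Fin.mk.injEq] at hh
      simp only [Subtype.mk.injEq, Prod.mk.injEq, Fin.ext_iff]
      refine ⟨by rw [hh.1], by omega⟩
    have h4 := Fintype.linearIndependent_iff.1 (hbli.comp ι hι) (fun p => c p) h1
    exact fun p hp => h4 ⟨p, hp⟩
  set u : Fin d → F := ∑ p, c p • (N ^ ((p.2 : ℕ) - k) *ᵥ v p.1) with hu
  have huW : u ∈ W := W.sum_mem fun p _ => W.smul_mem _ (hbW _ _)
  have hku : N ^ k *ᵥ u = N ^ k *ᵥ w := by
    rw [← hc, hu, Matrix.mulVec_sum]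
    apply Finset.sum_congr rfl
    intro p _
    by_cases hp : (p.2 : ℕ) < k
    · rw [hc0 p hp]; simp
    · simp only [hb]
      rw [Matrix.mulVec_smul, Matrix.mulVec_mulVec, ← pow_add]
      congr 4
      omega
  refine ⟨w - u, by rw [Matrix.mulVec_sub, hku, sub_self], hs.trans ?_⟩
  have hWle : W ≤ Submodule.span F (Set.range (chainVec n k N v (w - u))) := by
    apply Submodule.span_mono
    rintro _ ⟨p, rfl⟩
    exact ⟨Sum.inl p, rfl⟩
  rw [Submodule.span_le]
  rintro _ ⟨s, rfl⟩
  rcases s with p | i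
  · exact hWle (Submodule.subset_span ⟨p, rfl⟩)
  · have : chainVec n k N v w (Sum.inr i) =
        chainVec n k N v (w - u) (Sum.inr i) + N ^ (i : ℕ) *ᵥ u := by
      simp [chainVec, Matrix.mulVec_sub]
    rw [this]
    exact Submodule.add_mem _ (Submodule.subset_span ⟨_, rfl⟩) (hWle (hWm _ _ huW))

theorem orbit_sub {F : Type*} [Field F] (hd : d = r * n + k) (hk : k < n)
    (g : (Matrix (Fin d) (Fin d) F)ˣ) : ∃ v w,
      chainMat hd ((g : Matrix (Fin d) (Fin d) F) * Nmod F d n r k hd *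
        (↑g⁻¹ : Matrix (Fin d) (Fin d) F)) v w = g := by
  have hpow : ∀ (m : ℕ) (x : Fin d → F), ((g : Matrix (Fin d) (Fin d) F) * Nmod F d n r k hd *
        (↑g⁻¹ : Matrix (Fin d) (Fin d) F)) ^ m *ᵥ ((g : Matrix (Fin d) (Fin d) F) *ᵥ x) =
        (g : Matrix (Fin d) (Fin d) F) *ᵥ (Nmod F d n r k hd ^ m *ᵥ x) := by
    intro m x
    rw [Units.conj_pow, Matrix.mulVec_mulVec, Matrix.mul_assoc, Units.inv_mul, Matrix.mul_one,
      ← Matrix.mulVec_mulVec]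
  refine ⟨fun j => (g : Matrix (Fin d) (Fin d) F) *ᵥ
      Pi.single (chainEquiv hd (Sum.inl (j, ⟨0, by omega⟩))) 1,
    if h : 0 < k then (g : Matrix (Fin d) (Fin d) F) *ᵥ
      Pi.single (chainEquiv hd (Sum.inr ⟨0, h⟩)) 1 else 0, ?_⟩
  apply Matrix.ext_of_mulVec_single
  intro l
  obtain ⟨s, rfl⟩ := (chainEquiv hd).surjective l
  rw [chainMat_mulVec]
  rcases s with ⟨j, i⟩ | i
  · simp only [chainVec, Sum.elim_inl]
    rw [hpow, Nmod_pow_inl _ _ _ i.2]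
  · have h : 0 < k := by have := i.2; omega
    simp only [chainVec, Sum.elim_inr, dif_pos h]
    rw [hpow, Nmod_pow_inr _ _ i.2]

theorem orbit_sup {F : Type*} [Field F] (hd : d = r * n + k) (hk : k < n)
    (N : Matrix (Fin d) (Fin d) F) (hN : N ^ n = 0) (v : Fin r → Fin d → F) (w : Fin d → F)
    (h : (chainMat hd N v w).det ≠ 0) : ∃ g : (Matrix (Fin d) (Fin d) F)ˣ,
      N = (g : Matrix (Fin d) (Fin d) F) * Nmod F d n r k hd *
        (↑g⁻¹ : Matrix (Fin d) (Fin d) F) := by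
  have hrange : ∀ w, Set.range (chainVec n k N v w) =
      Set.range (fun j => chainVec n k N v w ((chainEquiv hd).symm j)) := by
    intro w
    exact ((chainEquiv hd).symm.surjective.range_comp (chainVec n k N v w)).symm
  have hs : ⊤ ≤ Submodule.span F (Set.range (chainVec n k N v w)) := by
    have h1 : LinearIndependent F (fun j => chainVec n k N v w ((chainEquiv hd).symm j)) :=
      Matrix.linearIndependent_cols_iff_isUnit.2
        ((Matrix.isUnit_iff_isUnit_det _).2 (isUnit_iff_ne_zero.2 h))
    rw [hrange, h1.span_eq_top_of_card_eq_finrank' (by simp)]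
  obtain ⟨w', hw, hs'⟩ := fix_w hd hk N hN v w hs
  rw [hrange] at hs'
  obtain ⟨g, hg⟩ : IsUnit (chainMat hd N v w') := isUnit_of_span _ hs'
  refine ⟨g, ?_⟩
  rw [Units.eq_mul_inv_iff_mul_eq, hg]
  apply Matrix.ext_of_mulVec_single
  intro l
  obtain ⟨s, rfl⟩ := (chainEquiv hd).surjective l
  rw [← Matrix.mulVec_mulVec, ← Matrix.mulVec_mulVec, chainMat_mulVec]
  rcases s with ⟨j, i⟩ | i
  · rw [Nmod_inl]
    split_ifs with h1
    · rw [chainMat_mulVec]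
      simp [chainVec, pow_succ']
    · have : (i : ℕ) + 1 = n := by omega
      simp only [chainVec, Sum.elim_inl, Matrix.mulVec_mulVec, ← pow_succ', this, hN]
      simp
  · rw [Nmod_inr]
    split_ifs with h1
    · rw [chainMat_mulVec]
      simp [chainVec, pow_succ']
    · have : (i : ℕ) + 1 = k := by omega
      simp only [chainVec, Sum.elim_inr, Matrix.mulVec_mulVec, ← pow_succ', this, hw]
      simp

end orbit


/-- for H = K[x]/(xⁿ) and d = r·n + k with 0 ≤ k < n, the representation
variety Rep(H,d) = {N | Nⁿ = 0} is irreducible in the Zariski topology, and the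
GL_d(K)-conjugation orbit of N_d is open in Rep(H,d) and dense in it. -/
theorem stmt_1 [IsAlgClosed K] [CharZero K]
    (n d r k : ℕ) (hn : 1 ≤ n) (hd : d = r * n + k) (hk : k < n) :
    letI := zariskiMat K d
    IsIrreducible {N : Matrix (Fin d) (Fin d) K | N ^ n = 0} ∧
    (∃ U : Set (Matrix (Fin d) (Fin d) K), IsOpen U ∧
      {M | ∃ g : (Matrix (Fin d) (Fin d) K)ˣ, M = (g : Matrix (Fin d) (Fin d) K) * Nmod K d n r k hd * (↑g⁻¹ : Matrix (Fin d) (Fin d) K)}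
        = U ∩ {N | N ^ n = 0}) ∧
    {N : Matrix (Fin d) (Fin d) K | N ^ n = 0}
      ⊆ closure {M | ∃ g : (Matrix (Fin d) (Fin d) K)ˣ,
          M = (g : Matrix (Fin d) (Fin d) K) * Nmod K d n r k hd * (↑g⁻¹ : Matrix (Fin d) (Fin d) K)} := by
  letI := zariskiMat K d
  have hirr := rep_irreducible (F := K) (d := d) n hn
  have hopen : IsOpen (⋃ (v : Fin r → Fin d → K) (w : Fin d → K),
      {N : Matrix (Fin d) (Fin d) K | (chainMat hd N v w).det ≠ 0}) :=
    isOpen_iUnion fun v => isOpen_iUnion fun w => chain_open hd v w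
  have horb : {M | ∃ g : (Matrix (Fin d) (Fin d) K)ˣ, M = (g : Matrix (Fin d) (Fin d) K) * Nmod K d n r k hd * (↑g⁻¹ : Matrix (Fin d) (Fin d) K)}
      = (⋃ (v : Fin r → Fin d → K) (w : Fin d → K),
      {N : Matrix (Fin d) (Fin d) K | (chainMat hd N v w).det ≠ 0}) ∩ {N | N ^ n = 0} := by
    ext M
    simp only [Set.mem_setOf_eq, Set.mem_inter_iff, Set.mem_iUnion]
    constructor
    · rintro ⟨g, rfl⟩
      obtain ⟨v, w, h⟩ := orbit_sub (F := K) hd hk g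
      refine ⟨⟨v, w, ?_⟩, ?_⟩
      · rw [h]
        exact ((Matrix.isUnit_iff_isUnit_det _).1 g.isUnit).ne_zero
      · rw [Units.conj_pow, Nmod_pow hd hk]; simp
    · rintro ⟨⟨v, w, h⟩, hM⟩
      exact orbit_sup hd hk M hM v w h
  refine ⟨hirr, ⟨_, hopen, horb⟩, ?_⟩
  intro N hN
  rw [mem_closure_iff]
  intro U hU hNU
  have hNd : Nmod K d n r k hd ∈ (⋃ (v : Fin r → Fin d → K) (w : Fin d → K),
      {N : Matrix (Fin d) (Fin d) K | (chainMat hd N v w).det ≠ 0}) ∩ {N | N ^ n = 0} := by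
    rw [← horb]
    exact ⟨1, by simp⟩
  obtain ⟨M, hM, hMU, hMV⟩ := hirr.2 U _ hU hopen ⟨N, hN, hNU⟩ ⟨_, hNd.2, hNd.1⟩
  refine ⟨M, hMU, ?_⟩
  rw [horb]
  exact ⟨hMV, hM⟩

end
end

section
/- Let H = KQ/(ε⁴) of type ℬ𝒞̃₁ and let V ∈ mod(H) be a brick (End_H(V) ≅ K) with dimension vector (v₁,v₂) where v₁ = dim V(1) and v₂ = dim V(2). Then the nilpotent endomorphism V(ε): V(1) → V(1) has maximal rank among operators with fourth power zero, i.e. writing v₁ = 4r+s with 0 ≤ s ≤ 3, dim_K End_{K[x]/(x⁴)}(V(1)) = 4r² + 2rs + s. -/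
noncomputable section

open Matrix

variable (K : Type*) [Field K]

/-- The commutant of an endomorphism. -/
def commSub {V : Type*} [AddCommGroup V] [Module K V] (E : Module.End K V) :
    Submodule K (Module.End K V) :=
  LinearMap.ker (LinearMap.mulLeft K E - LinearMap.mulRight K E)

lemma mem_commSub {V : Type*} [AddCommGroup V] [Module K V] (E P : Module.End K V) :
    P ∈ commSub K E ↔ ∀ x, E (P x) = P (E x) := by
  simp [commSub, sub_eq_zero, LinearMap.ext_iff]

/-- `E` restricted to its range. -/
def resE {V : Type*} [AddCommGroup V] [Module K V] (E : Module.End K V) :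
    Module.End K (LinearMap.range E) :=
  LinearMap.restrict E (fun x _ => LinearMap.mem_range_self E x)

/-- Restriction of the commutant to the range. -/
def rhoMap {V : Type*} [AddCommGroup V] [Module K V] (E : Module.End K V) :
    commSub K E →ₗ[K] commSub K (resE K E) where
  toFun P := ⟨LinearMap.restrict (p := LinearMap.range E) (q := LinearMap.range E) P.1 (by
      rintro _ ⟨y, rfl⟩
      exact ⟨P.1 y, ((mem_commSub K E P.1).1 P.2 y)⟩), by
      rw [mem_commSub]
      intro x
      apply Subtype.ext
      exact (mem_commSub K E P.1).1 P.2 x.1⟩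
  map_add' P Q := by
    apply Subtype.ext; ext x; rfl
  map_smul' c P := by
    apply Subtype.ext; ext x; rfl

lemma rhoMap_apply {V : Type*} [AddCommGroup V] [Module K V] (E : Module.End K V)
    (P : commSub K E) (x : LinearMap.range E) : (((rhoMap K E P).1 x : LinearMap.range E) : V) =
      P.1 x.1 := rfl

lemma rhoMap_surj {V : Type*} [AddCommGroup V] [Module K V] (E : Module.End K V) :
    Function.Surjective (rhoMap K E) := by
  intro φ
  obtain ⟨C, hC⟩ := Submodule.exists_isCompl (LinearMap.range E)
  -- a section of E : V → range E
  obtain ⟨σ, hσ⟩ := LinearMap.exists_rightInverse_of_surjective E.rangeRestrict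
    (LinearMap.range_rangeRestrict E)
  have hσ' : ∀ y : LinearMap.range E, E (σ y) = y.1 := fun y => by
    have := LinearMap.congr_fun hσ y
    exact congrArg Subtype.val this
  let f1 : LinearMap.range E →ₗ[K] V := (LinearMap.range E).subtype ∘ₗ φ.1
  let f2 : C →ₗ[K] V := σ ∘ₗ φ.1 ∘ₗ E.rangeRestrict ∘ₗ C.subtype
  let P : Module.End K V := LinearMap.ofIsCompl hC f1 f2
  have h1 : ∀ y : LinearMap.range E, P y.1 = (φ.1 y).1 := fun y =>
    LinearMap.ofIsCompl_apply_left hC y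
  have h2 : ∀ y : C, P y.1 = σ (φ.1 (E.rangeRestrict y.1)) := fun y =>
    LinearMap.ofIsCompl_apply_right hC y
  have hP : P ∈ commSub K E := by
    rw [mem_commSub]
    intro x
    obtain ⟨a, b, hab, -⟩ := Submodule.existsUnique_add_of_isCompl hC x
    rw [← hab]
    simp only [map_add]
    congr 1
    · rw [h1]
      have e := (mem_commSub K _ φ.1).1 φ.2 a
      have e2 := congrArg Subtype.val e
      rw [← h1] at e2
      exact e2
    · rw [h2, hσ']
      exact (h1 (E.rangeRestrict b.1)).symm
  refine ⟨⟨P, hP⟩, ?_⟩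
  apply Subtype.ext
  ext x
  exact h1 x

/-- The kernel of the restriction map. -/
def kerRho {V : Type*} [AddCommGroup V] [Module K V] (E : Module.End K V) :
    ((V ⧸ LinearMap.range E) →ₗ[K] LinearMap.ker E) ≃ₗ[K] LinearMap.ker (rhoMap K E) where
  toFun f := ⟨⟨(LinearMap.ker E).subtype ∘ₗ f ∘ₗ (LinearMap.range E).mkQ, by
      rw [mem_commSub]
      intro x
      have h0 : (LinearMap.range E).mkQ (E x) = 0 := by simp
      have h1 : E ((f ((LinearMap.range E).mkQ x)).1) = 0 := (f _).2
      simp only [LinearMap.comp_apply, h0, map_zero]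
      exact h1⟩, by
      rw [LinearMap.mem_ker]
      apply Subtype.ext
      ext ⟨_, y, rfl⟩
      have h0 : (LinearMap.range E).mkQ (E y) = 0 := by simp
      rw [rhoMap_apply]
      simp only [LinearMap.comp_apply, h0, map_zero]
      rfl⟩
  map_add' f g := by
    apply Subtype.ext; apply Subtype.ext; ext x; rfl
  map_smul' c f := by
    apply Subtype.ext; apply Subtype.ext; ext x; rfl
  invFun P := (LinearMap.range E).liftQ
    (LinearMap.codRestrict (LinearMap.ker E) P.1.1 (fun x => by
      have h := LinearMap.congr_fun (congrArg Subtype.val P.2) (E.rangeRestrict x)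
      have h' := congrArg Subtype.val h
      rw [rhoMap_apply] at h'
      rw [LinearMap.mem_ker, (mem_commSub K E _).1 P.1.2 x]
      exact h')) (by
      rintro _ ⟨x, rfl⟩
      have h := LinearMap.congr_fun (congrArg Subtype.val P.2) (E.rangeRestrict x)
      have h' := congrArg Subtype.val h
      rw [rhoMap_apply] at h'
      rw [LinearMap.mem_ker]
      apply Subtype.ext
      exact h')
  left_inv f := by
    ext x
    rfl
  right_inv P := by
    apply Subtype.ext; apply Subtype.ext; ext x; rfl

lemma commSub_rec {V : Type*} [AddCommGroup V] [Module K V] [FiniteDimensional K V]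
    (E : Module.End K V) : ∃ a : ℕ,
    Module.finrank K V = a + Module.finrank K (LinearMap.range E) ∧
    Module.finrank K (commSub K E) = a ^ 2 + Module.finrank K (commSub K (resE K E)) := by
  refine ⟨Module.finrank K (LinearMap.ker E), ?_, ?_⟩
  · have := LinearMap.finrank_range_add_finrank_ker E
    omega
  · have h1 := LinearMap.finrank_range_add_finrank_ker (K := K) (V := commSub K E)
      (V₂ := commSub K (resE K E)) (rhoMap K E)
    rw [LinearMap.range_eq_top.2 (rhoMap_surj K E), finrank_top,
      ← (kerRho K E).finrank_eq, Module.finrank_linearMap] at h1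
    have h2 := LinearMap.finrank_range_add_finrank_ker E
    have h3 := Submodule.finrank_quotient_add_finrank (LinearMap.range E)
    have h4 : Module.finrank K (V ⧸ LinearMap.range E) = Module.finrank K (LinearMap.ker E) := by
      omega
    rw [h4] at h1
    rw [sq]
    omega

lemma commSub_bound (k : ℕ) : ∀ {V : Type*} [AddCommGroup V] [Module K V]
    [FiniteDimensional K V] (E : Module.End K V), E ^ k = 0 →
    Module.finrank K (commSub K E) % 2 = Module.finrank K V % 2 ∧
    Module.finrank K V ^ 2 ≤ k * Module.finrank K (commSub K E) := by
  induction k with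
  | zero =>
    intro V _ _ _ E hE
    have : Subsingleton V := ⟨fun x y => by
      have hx := LinearMap.congr_fun hE x
      have hy := LinearMap.congr_fun hE y
      simp at hx hy
      rw [hx, hy]⟩
    have h2 : Subsingleton (Module.End K V) := ⟨fun f g => by
      ext x; exact Subsingleton.elim _ _⟩
    have h3 : Subsingleton (commSub K E) := inferInstance
    simp [Module.finrank_zero_of_subsingleton]
  | succ k ih =>
    intro V _ _ _ E hE
    obtain ⟨a, h1, h2⟩ := commSub_rec K E
    have hr : resE K E ^ k = 0 := by
      ext ⟨_, y, rfl⟩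
      have h : ∀ (m : ℕ) (x : LinearMap.range E), (((resE K E ^ m) x : LinearMap.range E) : V)
          = (E ^ m) x.1 := by
        intro m
        induction m with
        | zero => intro x; rfl
        | succ m im =>
          intro x
          rw [pow_succ, pow_succ, Module.End.mul_apply, Module.End.mul_apply, im]
          rfl
      rw [h]
      have := LinearMap.congr_fun hE y
      rw [pow_succ, Module.End.mul_apply] at this
      exact this
    obtain ⟨i1, i2⟩ := ih (resE K E) hr
    rw [h1, h2]
    generalize Module.finrank K (LinearMap.range E) = n at *
    generalize Module.finrank K (commSub K (resE K E)) = c at *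
    constructor
    · have : a ^ 2 % 2 = a % 2 := by
        rcases Nat.mod_two_eq_zero_or_one a with h | h <;> simp [Nat.pow_mod, h]
      omega
    · rcases Nat.eq_zero_or_pos k with hk | hk
      · subst hk
        have : n = 0 := by simpa using i2
        subst this
        nlinarith
      · zify at *
        have hk' : (0 : ℤ) < k := hk
        refine le_of_mul_le_mul_left ?_ hk'
        nlinarith [sq_nonneg ((k : ℤ) * a - n), mul_le_mul_of_nonneg_left i2 hk'.le]

lemma commSub_matrix (n : ℕ) (E : Matrix (Fin n) (Fin n) K) :
    Module.finrank K (LinearMap.ker (LinearMap.mulLeft K E - LinearMap.mulRight K E))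
      = Module.finrank K (commSub K (Matrix.toLinAlgEquiv' E)) := by
  let e : Matrix (Fin n) (Fin n) K ≃ₗ[K] Module.End K (Fin n → K) :=
    Matrix.toLinAlgEquiv'.toLinearEquiv
  have he : ∀ P Q, e (P * Q) = e P * e Q := fun P Q => map_mul Matrix.toLinAlgEquiv' P Q
  refine LinearEquiv.finrank_eq (LinearEquiv.ofSubmodules e _ _ ?_)
  ext P
  rw [Submodule.mem_map_equiv]
  obtain ⟨P, rfl⟩ := e.surjective P
  change _ ↔ _ ∈ LinearMap.ker (LinearMap.mulLeft K (e E) - LinearMap.mulRight K (e E))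
  simp only [LinearEquiv.symm_apply_apply, LinearMap.mem_ker, LinearMap.sub_apply,
    LinearMap.mulLeft_apply, LinearMap.mulRight_apply, sub_eq_zero, ← he, e.injective.eq_iff]

lemma upper_bound (v1 v2 : ℕ)
    (E : Matrix (Fin v1) (Fin v1) K)
    (B : Matrix (Fin v1) (Fin v2) K)
    (hbrick : ∀ (P : Matrix (Fin v1) (Fin v1) K) (Q : Matrix (Fin v2) (Fin v2) K),
      P * E = E * P → P * B = B * Q →
      ∃ c : K, P = c • (1 : Matrix (Fin v1) (Fin v1) K)
        ∧ Q = c • (1 : Matrix (Fin v2) (Fin v2) K)) :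
    Module.finrank K
      (LinearMap.ker (LinearMap.mulLeft K E - LinearMap.mulRight K E)) + v2 * v2
      ≤ v1 * v2 + 1 := by
  set C := LinearMap.ker (LinearMap.mulLeft K E - LinearMap.mulRight K E) with hC
  have hmem : ∀ P, P ∈ C ↔ E * P = P * E := by
    intro P; simp [hC, sub_eq_zero]
  let f : (C × Matrix (Fin v2) (Fin v2) K) →ₗ[K] Matrix (Fin v1) (Fin v2) K :=
    { toFun := fun x => x.1.1 * B - B * x.2
      map_add' := by
        intro x y
        simp [Matrix.add_mul, Matrix.mul_add]
        abel
      map_smul' := by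
        intro c x
        simp [smul_sub] }
  have h1 := LinearMap.finrank_range_add_finrank_ker f
  have h2 : Module.finrank K (LinearMap.range f) ≤ v1 * v2 := by
    refine (Submodule.finrank_le _).trans ?_
    simp [Module.finrank_matrix]
  have hone : (1 : Matrix (Fin v1) (Fin v1) K) ∈ C := by rw [hmem]; simp
  have h3 : LinearMap.ker f ≤ Submodule.span K {((⟨1, hone⟩ : C), (1 : Matrix (Fin v2) (Fin v2) K))} := by
    rintro ⟨⟨P, hP⟩, Q⟩ hx
    have hx' : P * B - B * Q = 0 := hx
    obtain ⟨c, rfl, rfl⟩ := hbrick P Q ((hmem P).1 hP).symm (sub_eq_zero.1 hx')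
    exact Submodule.mem_span_singleton.2 ⟨c, rfl⟩
  have h4 : Module.finrank K (LinearMap.ker f) ≤ 1 :=
    (Submodule.finrank_mono h3).trans (by
      refine (finrank_span_le_card (R := K) _).trans ?_
      simp)
  rw [Module.finrank_prod] at h1
  simp only [Module.finrank_matrix, Fintype.card_fin, Module.finrank_self, mul_one] at h1
  omega

/-- Let H = KQ/(ε⁴) of type 𝔹ℂ̃₁ and let V be a brick, given by the
ε-action E on V(1) = K^{v₁} (with E⁴ = 0) and the α-action B : V(2) = K^{v₂} → V(1).
Then E has maximal rank among operators with fourth power zero: writing v₁ = 4r + s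
with 0 ≤ s ≤ 3, the commutant of E (that is End_{K[x]/(x⁴)}(V(1)), the kernel of
P ↦ E·P − P·E) has dimension 4r² + 2rs + s. -/
theorem stmt_9 [IsAlgClosed K] [CharZero K]
    (v1 v2 r s : ℕ) (hv : v1 = 4 * r + s) (hs : s ≤ 3)
    (E : Matrix (Fin v1) (Fin v1) K) (hE : E ^ 4 = 0)
    (B : Matrix (Fin v1) (Fin v2) K)
    (hbrick : ∀ (P : Matrix (Fin v1) (Fin v1) K) (Q : Matrix (Fin v2) (Fin v2) K),
      P * E = E * P → P * B = B * Q →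
      ∃ c : K, P = c • (1 : Matrix (Fin v1) (Fin v1) K)
        ∧ Q = c • (1 : Matrix (Fin v2) (Fin v2) K)) :
    Module.finrank K
      (LinearMap.ker (LinearMap.mulLeft K E - LinearMap.mulRight K E))
      = 4 * r ^ 2 + 2 * r * s + s := by
  have hu := upper_bound K v1 v2 E B hbrick
  have hE' : Matrix.toLinAlgEquiv' E ^ 4 = 0 := by
    rw [← map_pow, hE, map_zero]
  obtain ⟨hp, hl⟩ := commSub_bound K 4 (Matrix.toLinAlgEquiv' E) hE'
  rw [← commSub_matrix] at hp hl
  generalize Module.finrank K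
      (LinearMap.ker (LinearMap.mulLeft K E - LinearMap.mulRight K E)) = d at *
  simp only [Module.finrank_fintype_fun_eq_card, Fintype.card_fin] at hp hl
  have hu4 : 4 * d ≤ v1 ^ 2 + 4 := by
    clear hp hl hE' hbrick hE
    zify at *
    nlinarith [sq_nonneg ((v1 : ℤ) - 2 * v2)]
  clear hu hbrick hE hE'
  subst hv
  have e1 : (4 * r + s) ^ 2 = 16 * (r ^ 2) + 8 * (r * s) + s ^ 2 := by ring
  rw [e1] at hl hu4
  have e2 : 2 * r * s = 2 * (r * s) := by ring
  rw [e2]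
  generalize r ^ 2 = q at *
  interval_cases s <;> omega

end
end

section
/- Let H = KQ/(ε⁴) of type ℬ𝒞̃₁ and let d = (d₁,d₂) be a dimension vector; write d₁ = 4r + s with 0 ≤ s < 4. Then the variety Rep(H,d) is irreducible of dimension d₁d₂ + d₁² − 4r² − 2sr − s. -/
noncomputable section

open Matrix

variable (K : Type*) [Field K]

/-- The Zariski topology on affine space ι → K. -/
def zariskiAff (ι : Type*) [Fintype ι] : TopologicalSpace (ι → K) :=
  TopologicalSpace.generateFrom
    {U | ∃ p : MvPolynomial ι K, U = {x | MvPolynomial.eval x p ≠ 0}}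


theorem rep_dim_integral {R S : Type*} [CommRing R] [CommRing S] [IsDomain S] [Algebra R S]
    [Algebra.IsIntegral R S] (hinj : Function.Injective (algebraMap R S)) :
    ringKrullDim S = ringKrullDim R := by
  apply le_antisymm
  · refine Order.krullDim_le_of_strictMono (PrimeSpectrum.comap (algebraMap R S)) ?_
    intro I J h
    exact Ideal.IsIntegral.comap_lt_comap (R := R) (I := I.asIdeal) (J := J.asIdeal) h
  · refine iSup_le fun l => ?_
    obtain ⟨Q, hQ, hQ'⟩ := Ideal.exists_ideal_over_prime_of_isIntegral_of_isDomain (S := S)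
      l.head.asIdeal (by rw [(RingHom.injective_iff_ker_eq_bot _).1 hinj]; exact bot_le)
    have : Q.LiesOver l.head.asIdeal := ⟨hQ'.symm⟩
    obtain ⟨L, hL, -⟩ := Ideal.exists_ltSeries_of_hasGoingUp l Q
    rw [← hL]
    exact Order.LTSeries.length_le_krullDim L

theorem rep_dim_eq {K A τ : Type*} [Field K] [CommRing A] [IsDomain A] [Algebra K A]
    [Algebra.FiniteType K A] [Fintype τ] (x : τ → A) (hx : AlgebraicIndependent K x)
    (φ : A →ₐ[K] MvPolynomial τ K) (hφ : Function.Injective φ) :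
    ringKrullDim A = (Fintype.card τ : ℕ∞) := by
  obtain ⟨d, g, hg, hgi⟩ := exists_integral_inj_algHom_of_fg K A
  have hind : AlgebraicIndependent K (fun i => g (MvPolynomial.X i)) := by
    have : (MvPolynomial.aeval (fun i => g (MvPolynomial.X i)) : _ →ₐ[K] A) = g := by
      ext i; simp
    rw [AlgebraicIndependent, this]; exact hg
  have h1 : d ≤ Fintype.card τ := by
    have h := (hind.map' hφ).lift_cardinalMk_le_trdeg
    rw [MvPolynomial.trdeg_of_isDomain] at h
    simpa using h
  have h2 : Fintype.card τ ≤ d := by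
    have hb : IsTranscendenceBasis K (fun i => g (MvPolynomial.X i)) := by
      algebraize [g.toRingHom]
      have : FaithfulSMul (MvPolynomial (Fin d) K) A :=
        (faithfulSMul_iff_algebraMap_injective _ _).mpr hg
      have : IsScalarTower K (MvPolynomial (Fin d) K) A :=
        IsScalarTower.of_algebraMap_eq' (AlgHom.comp_algebraMap g).symm
      exact (IsTranscendenceBasis.mvPolynomial (Fin d) K).algebraMap_comp (A := A)
    have h := hx.lift_cardinalMk_le_trdeg
    have h' := hb.lift_cardinalMk_eq_trdeg
    rw [Cardinal.lift_id'] at h'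
    rw [← h'] at h
    simpa using h
  have hd : d = Fintype.card τ := le_antisymm h1 h2
  algebraize [g.toRingHom]
  rw [rep_dim_integral (R := MvPolynomial (Fin d) K) (S := A) hg]
  simp [hd]

theorem rep_pderiv_aeval {K σ τ : Type*} [Field K] [Fintype τ] (G : τ → MvPolynomial σ K) (i : σ)
    (f : MvPolynomial τ K) :
    MvPolynomial.pderiv i (MvPolynomial.aeval G f) =
      ∑ q, MvPolynomial.aeval G (MvPolynomial.pderiv q f) * MvPolynomial.pderiv i (G q) := by
  classical
  induction f using MvPolynomial.induction_on with
  | C a => simp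
  | add p q hp hq => simp only [map_add, hp, hq, add_mul, Finset.sum_add_distrib]
  | mul_X p n hp =>
    simp only [map_mul, MvPolynomial.aeval_X, Derivation.leibniz, smul_eq_mul, map_add, hp,
      MvPolynomial.pderiv_X, add_mul, Finset.sum_add_distrib]
    congr 1
    · rw [Finset.sum_eq_single n]
      · simp
      · intro b _ hb; simp [hb.symm]
      · simp
    · rw [Finset.mul_sum]
      exact Finset.sum_congr rfl fun _ _ => by ring

theorem rep_totalDegree_pderiv {K σ : Type*} [Field K] (f : MvPolynomial σ K) (i : σ) (n : ℕ)
    (h : f.totalDegree ≤ n + 1) : (MvPolynomial.pderiv i f).totalDegree ≤ n := by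
  classical
  refine Finset.sup_le fun m hm => ?_
  rw [MvPolynomial.mem_support_iff, MvPolynomial.coeff_pderiv] at hm
  have h1 := MvPolynomial.le_totalDegree
    (MvPolynomial.mem_support_iff.2 (left_ne_zero_of_mul hm))
  rw [Finsupp.sum_add_index' (fun _ => rfl) (fun _ _ _ => rfl)] at h1
  simp only [Finsupp.sum_single_index] at h1
  omega

theorem rep_const {K σ : Type*} [Field K] [CharZero K] (f : MvPolynomial σ K)
    (h : ∀ i, MvPolynomial.pderiv i f = 0) : f = MvPolynomial.C (f.coeff 0) := by
  classical
  ext m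
  rw [MvPolynomial.coeff_C]
  split_ifs with hm
  · rw [hm]
  · obtain ⟨i, hi⟩ : ∃ i, m i ≠ 0 := by
      by_contra! hc
      exact hm (Finsupp.ext fun i => (hc i).symm)
    have := congrArg (MvPolynomial.coeff (m - Finsupp.single i 1)) (h i)
    rw [MvPolynomial.coeff_pderiv, MvPolynomial.coeff_zero, mul_eq_zero] at this
    rcases this with h | h
    · rwa [tsub_add_cancel_of_le] at h
      simpa using Nat.one_le_iff_ne_zero.2 hi
    · exact absurd h (Nat.cast_add_one_ne_zero _)

theorem rep_algInd {K τ : Type*} [Field K] [CharZero K] [Fintype τ] [DecidableEq τ]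
    (G : τ → MvPolynomial τ K) (y : τ → K)
    (h : ∀ p q, MvPolynomial.eval y (MvPolynomial.pderiv p (G q)) = if p = q then 1 else 0) :
    AlgebraicIndependent K G := by
  rw [algebraicIndependent_iff]
  have key : ∀ n : ℕ, ∀ f : MvPolynomial τ K, f.totalDegree ≤ n →
      MvPolynomial.aeval G f = 0 → f = 0 := by
    have fin : ∀ f : MvPolynomial τ K, MvPolynomial.aeval G f = 0 →
        (∀ i, MvPolynomial.pderiv i f = 0) → f = 0 := by
      intro f hf hd
      rw [rep_const f hd] at hf ⊢
      simpa using hf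
    have der : ∀ f : MvPolynomial τ K, MvPolynomial.aeval G f = 0 →
        ∀ i, MvPolynomial.aeval G (MvPolynomial.pderiv i f) = 0 := by
      intro f hf
      let J : Matrix τ τ (MvPolynomial τ K) := Matrix.of fun q p => MvPolynomial.pderiv p (G q)
      have hJ : J.det ≠ 0 := by
        intro h0
        have := congrArg (MvPolynomial.eval y) h0
        rw [RingHom.map_det, map_zero] at this
        have h1 : (MvPolynomial.eval y).mapMatrix J = 1 := by
          ext q p
          simp [J, h, Matrix.one_apply, eq_comm]
        rw [h1, Matrix.det_one] at this
        exact one_ne_zero this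
      have := Matrix.eq_zero_of_vecMul_eq_zero hJ
        (v := fun q => MvPolynomial.aeval G (MvPolynomial.pderiv q f)) (by
          ext1 p
          have := rep_pderiv_aeval G p f
          rw [hf, map_zero] at this
          simpa [Matrix.vecMul, dotProduct, J] using this.symm)
      exact fun i => congrFun this i
    intro n
    induction n with
    | zero =>
      intro f hf hz
      apply fin f hz
      intro i
      rw [(MvPolynomial.totalDegree_eq_zero_iff_eq_C).1 (Nat.le_zero.1 hf)]
      simp
    | succ n ih =>
      intro f hf hz
      exact fin f hz fun i => ih _ (rep_totalDegree_pderiv f i n hf) (der f hz i)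
  exact fun f hf => key _ f le_rfl hf

theorem rep_zar_basis {K : Type*} [Field K] {σ : Type*} [Fintype σ] :
    letI := zariskiAff K σ
    TopologicalSpace.IsTopologicalBasis
      {U : Set (σ → K) | ∃ p : MvPolynomial σ K, U = {x | MvPolynomial.eval x p ≠ 0}} := by
  let _ := zariskiAff K σ
  refine ⟨?_, ?_, rfl⟩
  · rintro _ ⟨p, rfl⟩ _ ⟨q, rfl⟩ x ⟨hp, hq⟩
    refine ⟨_, ⟨p * q, rfl⟩, ?_, ?_⟩
    · simp only [Set.mem_ofPred_eq, map_mul] at *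
      exact mul_ne_zero hp hq
    · intro y hy
      simp only [Set.mem_ofPred_eq, map_mul] at hy
      exact ⟨left_ne_zero_of_mul hy, right_ne_zero_of_mul hy⟩
  · refine Set.eq_univ_of_forall fun x => ⟨_, ⟨1, rfl⟩, by simp⟩

theorem rep_zar_closed_iff {K : Type*} [Field K] {σ : Type*} [Fintype σ] (Z : Set (σ → K)) :
    @IsClosed _ (zariskiAff K σ) Z ↔
      MvPolynomial.zeroLocus K (MvPolynomial.vanishingIdeal K Z) = Z := by
  let _ := zariskiAff K σ
  constructor
  · intro hZ
    refine le_antisymm ?_ (MvPolynomial.zeroLocus_vanishingIdeal_le Z)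
    intro x hx
    by_contra hxZ
    obtain ⟨_, ⟨p, rfl⟩, hpx, hp⟩ :=
      rep_zar_basis.exists_subset_of_mem_open (show x ∈ Zᶜ from hxZ) hZ.isOpen_compl
    apply hpx
    have := hx p (fun y hy => by
      by_contra h
      exact hp (show y ∈ {x | MvPolynomial.eval x p ≠ 0} by
        simpa [MvPolynomial.aeval_eq_eval] using h) hy)
    simpa [MvPolynomial.aeval_eq_eval] using this
  · intro h
    rw [← h]
    have : MvPolynomial.zeroLocus K (MvPolynomial.vanishingIdeal K Z) =
        ⋂ p ∈ MvPolynomial.vanishingIdeal K Z, {x | MvPolynomial.eval x p ≠ 0}ᶜ := by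
      ext x
      simp [MvPolynomial.aeval_eq_eval]
    rw [this]
    refine isClosed_biInter fun p _ => ?_
    exact IsOpen.isClosed_compl (TopologicalSpace.isOpen_generateFrom_of_mem ⟨p, rfl⟩)

theorem rep_zar_irr_prime {K : Type*} [Field K] {σ : Type*} [Fintype σ] (Z : Set (σ → K))
    (hZ : letI := zariskiAff K σ; IsIrreducible Z) :
    (MvPolynomial.vanishingIdeal K Z).IsPrime := by
  let _ := zariskiAff K σ
  obtain ⟨⟨x, hx⟩, hirr⟩ := hZ
  refine ⟨fun h => ?_, fun {p q} hpq => ?_⟩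
  · have : (1 : MvPolynomial σ K) ∈ MvPolynomial.vanishingIdeal K Z := h ▸ Submodule.mem_top
    simpa using this x hx
  · by_contra! hcon
    simp only [MvPolynomial.mem_vanishingIdeal_iff, not_forall] at hcon
    obtain ⟨⟨y, hy, hpy⟩, ⟨z, hz, hqz⟩⟩ := hcon
    obtain ⟨w, hw, hpw, hqw⟩ := hirr {x | MvPolynomial.eval x p ≠ 0}
      {x | MvPolynomial.eval x q ≠ 0}
      (TopologicalSpace.isOpen_generateFrom_of_mem ⟨p, rfl⟩)
      (TopologicalSpace.isOpen_generateFrom_of_mem ⟨q, rfl⟩)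
      ⟨y, hy, by simpa [MvPolynomial.aeval_eq_eval] using hpy⟩
      ⟨z, hz, by simpa [MvPolynomial.aeval_eq_eval] using hqz⟩
    have := hpq w hw
    simp only [MvPolynomial.aeval_eq_eval, map_mul] at this
    exact mul_ne_zero hpw hqw (by simpa using this)

theorem rep_zar_prime_irr {K : Type*} [Field K] [IsAlgClosed K] {σ : Type*} [Fintype σ]
    (P : Ideal (MvPolynomial σ K)) [hP : P.IsPrime] :
    letI := zariskiAff K σ
    IsIrreducible (MvPolynomial.zeroLocus K P) := by
  let _ := zariskiAff K σ
  have hv := MvPolynomial.IsPrime.vanishingIdeal_zeroLocus (K := K) P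
  constructor
  · by_contra h
    rw [Set.not_nonempty_iff_eq_empty] at h
    rw [h, MvPolynomial.vanishingIdeal_empty] at hv
    exact hP.ne_top hv.symm
  · rintro u v hu hv' ⟨y, hy, hyu⟩ ⟨z, hz, hzv⟩
    obtain ⟨_, ⟨p, rfl⟩, hpy, hpu⟩ := rep_zar_basis.exists_subset_of_mem_open hyu hu
    obtain ⟨_, ⟨q, rfl⟩, hqz, hqv⟩ := rep_zar_basis.exists_subset_of_mem_open hzv hv'
    have hp : p ∉ P := fun h => hpy (by simpa [MvPolynomial.aeval_eq_eval] using hy p h)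
    have hq : q ∉ P := fun h => hqz (by simpa [MvPolynomial.aeval_eq_eval] using hz q h)
    have hpq : p * q ∉ MvPolynomial.vanishingIdeal K (MvPolynomial.zeroLocus K P) := by
      rw [hv]
      exact fun h => (hP.mem_or_mem h).elim hp hq
    simp only [MvPolynomial.mem_vanishingIdeal_iff, not_forall] at hpq
    obtain ⟨w, hw, hpq⟩ := hpq
    simp only [MvPolynomial.aeval_eq_eval, map_mul] at hpq
    exact ⟨w, hw, hpu (by simpa using left_ne_zero_of_mul hpq),
      hqv (by simpa using right_ne_zero_of_mul hpq)⟩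

theorem rep_zar_dim {K : Type*} [Field K] [IsAlgClosed K] {σ : Type*} [Fintype σ]
    (I : Ideal (MvPolynomial σ K)) [hI : I.IsPrime] (V : Set (σ → K))
    (hV : V = MvPolynomial.zeroLocus K I) :
    letI := zariskiAff K σ
    topologicalKrullDim V = ringKrullDim (MvPolynomial σ K ⧸ I) := by
  let _ := zariskiAff K σ
  have hVI : MvPolynomial.vanishingIdeal K V = I := by
    rw [hV]; exact MvPolynomial.IsPrime.vanishingIdeal_zeroLocus (K := K) I
  have hVc : IsClosed V := by
    rw [rep_zar_closed_iff, hVI, hV]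
  rw [ringKrullDim_quotient, topologicalKrullDim]
  apply le_antisymm
  · rw [← Order.krullDim_orderDual]
    refine Order.krullDim_le_of_strictMono (fun Z =>
      (⟨⟨MvPolynomial.vanishingIdeal K (Subtype.val '' (OrderDual.ofDual Z).carrier), ?_⟩, ?_⟩ :
        PrimeSpectrum.zeroLocus (I : Set (MvPolynomial σ K)))) ?_
    · exact rep_zar_irr_prime _
        ((OrderDual.ofDual Z).isIrreducible'.image _ continuous_subtype_val.continuousOn)
    · rw [PrimeSpectrum.mem_zeroLocus]
      change I ≤ _
      rw [← hVI]
      apply MvPolynomial.vanishingIdeal_anti_mono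
      rintro _ ⟨x, _, rfl⟩
      exact x.2
    · intro Z W h
      have hcl : ∀ Z : TopologicalSpace.IrreducibleCloseds V, MvPolynomial.zeroLocus K
          (MvPolynomial.vanishingIdeal K (Subtype.val '' Z.carrier)) = Subtype.val '' Z.carrier :=
        fun Z => (rep_zar_closed_iff _).1 (hVc.isClosedMap_subtype_val _ Z.isClosed')
      have h' : OrderDual.ofDual W < OrderDual.ofDual Z := h
      refine lt_of_le_of_ne ?_ ?_
      · exact MvPolynomial.vanishingIdeal_anti_mono (Set.image_mono h'.le)
      · intro heq
        have heq' : MvPolynomial.vanishingIdeal K (Subtype.val '' (OrderDual.ofDual Z).carrier) =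
          MvPolynomial.vanishingIdeal K (Subtype.val '' (OrderDual.ofDual W).carrier) :=
          congrArg (fun P => P.1.asIdeal) heq
        have h2 := hcl (OrderDual.ofDual Z)
        rw [heq', hcl] at h2
        exact h'.ne (SetLike.coe_injective (Subtype.val_injective.image_injective h2))
  · rw [← Order.krullDim_orderDual]
    have him : ∀ P : PrimeSpectrum.zeroLocus (I : Set (MvPolynomial σ K)),
        Subtype.val '' (Subtype.val ⁻¹' (MvPolynomial.zeroLocus K P.1.asIdeal) : Set V) =
          MvPolynomial.zeroLocus K P.1.asIdeal := by
      intro P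
      rw [Subtype.image_preimage_coe, Set.inter_eq_right, hV]
      exact MvPolynomial.zeroLocus_anti_mono P.2
    refine Order.krullDim_le_of_strictMono (fun P =>
      (⟨Subtype.val ⁻¹' (MvPolynomial.zeroLocus K (OrderDual.ofDual P).1.asIdeal), ?_, ?_⟩ :
        TopologicalSpace.IrreducibleCloseds V)) ?_
    · have := rep_zar_prime_irr (K := K) (OrderDual.ofDual P).1.asIdeal
      rw [← him] at this
      refine ⟨this.1.of_image, ?_⟩
      rintro u v hu hv ⟨x, hx, hxu⟩ ⟨y, hy, hyv⟩
      obtain ⟨u', hu', rfl⟩ := isOpen_induced_iff.1 hu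
      obtain ⟨v', hv', rfl⟩ := isOpen_induced_iff.1 hv
      obtain ⟨_, ⟨w, hw, rfl⟩, hwu, hwv⟩ := this.2 u' v' hu' hv' ⟨x, ⟨x, hx, rfl⟩, hxu⟩
        ⟨y, ⟨y, hy, rfl⟩, hyv⟩
      exact ⟨w, hw, hwu, hwv⟩
    · refine IsClosed.preimage continuous_subtype_val ?_
      rw [rep_zar_closed_iff, MvPolynomial.IsPrime.vanishingIdeal_zeroLocus]
    · intro P Q h
      have h' : OrderDual.ofDual Q < OrderDual.ofDual P := h
      refine lt_of_le_of_ne ?_ ?_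
      · exact fun x hx => MvPolynomial.zeroLocus_anti_mono (K := K) (show (OrderDual.ofDual Q).1.asIdeal ≤
          (OrderDual.ofDual P).1.asIdeal from h'.le) hx
      · intro heq
        have heq' := congrArg (fun Z : TopologicalSpace.IrreducibleCloseds V =>
          MvPolynomial.vanishingIdeal K (Subtype.val '' Z.carrier)) heq
        simp only [him, MvPolynomial.IsPrime.vanishingIdeal_zeroLocus] at heq'
        exact h'.ne (Subtype.ext (PrimeSpectrum.ext heq'.symm))

theorem rep_rank_restrict {K V : Type*} [Field K] [AddCommGroup V] [Module K V]
    [FiniteDimensional K V] (f : Module.End K V) (U : Submodule K V) :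
    Module.finrank K (U.map f) + Module.finrank K (LinearMap.ker f ⊓ U : Submodule K V)
      = Module.finrank K U := by
  have h := (f.domRestrict U).finrank_range_add_finrank_ker
  rw [LinearMap.range_domRestrict, ← Submodule.finrank_map_subtype_eq,
    LinearMap.ker_domRestrict] at h
  rw [← h, Submodule.map_comap_subtype, inf_comm]

theorem rep_rank_facts {K V : Type*} [Field K] [AddCommGroup V] [Module K V]
    [FiniteDimensional K V] (f : Module.End K V) (m : ℕ) (hf : f ^ (m + 1) = 0) :
    (m + 1) * Module.finrank K (LinearMap.range f) + Module.finrank K V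
      ≤ (m + 1) * Module.finrank K V ∧
    (m + 1) * Module.finrank K (LinearMap.range (f ^ m)) ≤ Module.finrank K V := by
  have key : ∀ i, Module.finrank K (LinearMap.range (f ^ (i + 1))) +
      Module.finrank K (LinearMap.ker f ⊓ LinearMap.range (f ^ i) : Submodule K V)
      = Module.finrank K (LinearMap.range (f ^ i)) := by
    intro i
    rw [← rep_rank_restrict f (LinearMap.range (f ^ i)), pow_succ' f i,
      Module.End.mul_eq_comp, LinearMap.range_comp]
  have mono : ∀ i, LinearMap.range (f ^ (i + 1)) ≤ LinearMap.range (f ^ i) := by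
    intro i
    rw [pow_succ, Module.End.mul_eq_comp]
    exact LinearMap.range_comp_le_range _ _
  have anti : Antitone fun i => LinearMap.range (f ^ i) := antitone_nat_of_succ_le mono
  have hr := f.finrank_range_add_finrank_ker
  have h0 : Module.finrank K (LinearMap.range (f ^ 0)) = Module.finrank K V := by
    rw [pow_zero, Module.End.one_eq_id, LinearMap.range_id, finrank_top]
  have hz : Module.finrank K (LinearMap.range (f ^ (m + 1))) = 0 := by
    rw [hf, LinearMap.range_zero, finrank_bot]
  constructor
  · have : ∀ i, Module.finrank K V ≤ Module.finrank K (LinearMap.range (f ^ i)) +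
        i * Module.finrank K (LinearMap.ker f) := by
      intro i
      induction i with
      | zero => omega
      | succ i ih =>
        have h1 := key i
        have h2 : Module.finrank K (LinearMap.ker f ⊓ LinearMap.range (f ^ i) : Submodule K V)
          ≤ Module.finrank K (LinearMap.ker f) := Submodule.finrank_mono inf_le_left
        rw [add_mul]; omega
    have h := this (m + 1)
    rw [hz] at h
    nlinarith
  · have : ∀ i ≤ m + 1, Module.finrank K (LinearMap.range (f ^ i)) +
        i * Module.finrank K (LinearMap.range (f ^ m)) ≤ Module.finrank K V := by
      intro i hi
      induction i with
      | zero => omega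
      | succ i ih =>
        have h1 := key i
        have h3 := key m
        have h2 : Module.finrank K (LinearMap.ker f ⊓ LinearMap.range (f ^ m) : Submodule K V)
          ≤ Module.finrank K (LinearMap.ker f ⊓ LinearMap.range (f ^ i) : Submodule K V) :=
            Submodule.finrank_mono (inf_le_inf le_rfl (anti (by omega)))
        have := ih (by omega)
        rw [add_mul]; omega
    have h := this (m + 1) le_rfl
    omega

theorem rep_between {K V : Type*} [Field K] [AddCommGroup V] [Module K V]
    [FiniteDimensional K V] (U U' : Submodule K V) (h : U ≤ U') (d : ℕ)
    (h1 : Module.finrank K U ≤ d) (h2 : d ≤ Module.finrank K U') :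
    ∃ W : Submodule K V, U ≤ W ∧ W ≤ U' ∧ Module.finrank K W = d := by
  induction d, h1 using Nat.le_induction with
  | base => exact ⟨U, le_rfl, h, rfl⟩
  | succ d hd ih =>
    obtain ⟨W, hW1, hW2, hW3⟩ := ih (by omega)
    have : ¬ U' ≤ W := fun hle => by
      have := Submodule.finrank_mono (R := K) hle
      omega
    obtain ⟨x, hx, hxW⟩ := SetLike.not_le_iff_exists.1 this
    refine ⟨W ⊔ Submodule.span K {x}, hW1.trans le_sup_left, sup_le hW2 ?_, ?_⟩
    · simpa [Submodule.span_singleton_le_iff_mem] using hx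
    · rw [Submodule.finrank_sup_span_singleton hxW, hW3]

theorem rep_exists_W {K V : Type*} [Field K] [AddCommGroup V] [Module K V]
    [FiniteDimensional K V] (f : Module.End K V) (m r s : ℕ) (hf : f ^ (m + 1) = 0)
    (hn : Module.finrank K V = (m + 1) * r + s) (hs : s ≤ m + 1) :
    ∃ W : Submodule K V, LinearMap.range f ≤ W ∧ W ≤ LinearMap.ker (f ^ m) ∧
      Module.finrank K W = m * r + (s - 1) := by
  obtain ⟨h1, h2⟩ := rep_rank_facts f m hf
  have h3 := (f ^ m).finrank_range_add_finrank_ker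
  have hr : (m + 1) * r = m * r + r := by ring
  apply rep_between
  · rw [LinearMap.range_le_ker_iff, ← Module.End.mul_eq_comp, ← pow_succ, hf]
  · by_contra hc
    push Not at hc
    rw [hn] at h1
    rcases Nat.eq_zero_or_pos s with rfl | hs0
    · nlinarith
    · obtain ⟨t, rfl⟩ : ∃ t, s = t + 1 := ⟨s - 1, by omega⟩
      simp only [Nat.add_sub_cancel] at hc
      nlinarith
  · suffices Module.finrank K (LinearMap.range (f ^ m)) ≤ r + (s - (s - 1)) by omega
    by_contra hc
    push Not at hc
    rw [hn] at h2
    rcases Nat.eq_zero_or_pos s with rfl | hs0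
    · nlinarith
    · obtain ⟨t, rfl⟩ : ∃ t, s = t + 1 := ⟨s - 1, by omega⟩
      have : t + 1 - (t + 1 - 1) = 1 := by omega
      rw [this] at hc
      nlinarith

theorem rep_graph {K ι : Type*} [Field K] [Fintype ι] [DecidableEq ι]
    (W : Submodule K (ι → K)) :
    ∃ (p : ι → Prop) (B : Matrix {i // ¬ p i} {i // p i} K),
      Nat.card {i // p i} = Module.finrank K W ∧
      ∀ w, w ∈ W ↔ ∀ t, w t.1 = ∑ᶠ s, B t s * w s.1 := by
  classical
  obtain ⟨κ, a, ha, hsp, hli⟩ := exists_linearIndependent' K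
    (fun i : ι => W.mkQ (Pi.single i 1))
  have htop : Submodule.span K (Set.range (fun i : ι => W.mkQ (Pi.single i 1))) = ⊤ := by
    have h1 := (Pi.basisFun K ι).span_eq
    have h2 := congrArg (Submodule.map W.mkQ) h1
    rw [Submodule.map_span, Submodule.map_top, Submodule.range_mkQ, ← Set.range_comp] at h2
    rw [← h2]
    congr 2
    funext i
    simp
  have hfin : Finite κ := Finite.of_injective a ha
  have : Fintype κ := Fintype.ofFinite κ
  let b := Module.Basis.mk hli (by rw [hsp, htop])
  have hb : ∀ k, b k = W.mkQ (Pi.single (a k) 1) := fun k => by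
    simp [b, Module.Basis.mk_apply]
  let e : κ ≃ Set.range a := Equiv.ofInjective a ha
  have hcard : Fintype.card κ + Module.finrank K W = Fintype.card ι := by
    have h1 := W.finrank_quotient_add_finrank
    rw [Module.finrank_eq_card_basis b, Module.finrank_fintype_fun_eq_card] at h1
    exact h1
  refine ⟨fun i => i ∉ Set.range a, fun t s => - b.repr (W.mkQ (Pi.single s.1 1))
    (e.symm ⟨t.1, not_not.1 t.2⟩), ?_, ?_⟩
  · have h1 := Fintype.card_subtype_compl (fun i => i ∈ Set.range a)
    have h2 : Fintype.card {i // i ∈ Set.range a} = Fintype.card κ :=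
      (Fintype.card_congr e).symm
    simp only [Fintype.card_eq_nat_card] at h1 h2 hcard ⊢
    omega
  · intro w
    have hw : W.mkQ w = ∑ i, w i • W.mkQ (Pi.single i 1) := by
      conv_lhs => rw [pi_eq_sum_univ' w]
      rw [map_sum]
      refine Finset.sum_congr rfl fun i _ => ?_
      rw [← map_smul]
    have hrepr : ∀ k, b.repr (W.mkQ w) k = w (a k) +
        ∑ s : {i // i ∉ Set.range a}, w s.1 * b.repr (W.mkQ (Pi.single s.1 1)) k := by
      intro k
      rw [hw, map_sum, Finsupp.finsetSum_apply]
      rw [← Fintype.sum_subtype_add_sum_subtype (fun i => i ∈ Set.range a)]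
      congr 1
      · trans ∑ k', (b.repr (w (a k') • W.mkQ (Pi.single (a k') 1))) k
        · convert (Fintype.sum_equiv e (fun k' => (b.repr (w (a k') • W.mkQ (Pi.single (a k') 1))) k)
            (fun i => (b.repr (w i.1 • W.mkQ (Pi.single i.1 1))) k) fun _ => rfl).symm
        rw [Finset.sum_eq_single k]
        · rw [← hb, map_smul]
          simp
        · intro k' _ hk'
          rw [← hb, map_smul]
          simp [hk']
        · simp
      · refine Finset.sum_congr rfl fun s _ => ?_
        rw [map_smul]; rfl
    have h0 : w ∈ W ↔ ∀ k, b.repr (W.mkQ w) k = 0 := by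
      rw [← Submodule.Quotient.mk_eq_zero, ← Submodule.mkQ_apply,
        ← b.repr.map_eq_zero_iff, Finsupp.ext_iff]
      rfl
    rw [h0]
    have h3 : ∀ t : {i // ¬ i ∉ Set.range a}, (w t.1 = ∑ᶠ s : {i // i ∉ Set.range a},
        (- b.repr (W.mkQ (Pi.single s.1 1)) (e.symm ⟨t.1, not_not.1 t.2⟩)) * w s.1) ↔
        b.repr (W.mkQ w) (e.symm ⟨t.1, not_not.1 t.2⟩) = 0 := by
      intro t
      rw [hrepr, finsum_eq_sum_of_fintype]
      have : a (e.symm ⟨t.1, not_not.1 t.2⟩) = t.1 :=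
        congrArg Subtype.val (e.apply_symm_apply ⟨t.1, not_not.1 t.2⟩)
      rw [this, ← sub_eq_zero (a := w t.1), sub_eq_add_neg, ← Finset.sum_neg_distrib]
      simp only [neg_mul, neg_neg, mul_comm (w _)]
    constructor
    · intro h t
      exact (h3 t).2 (h _)
    · intro h k
      have := (h3 ⟨a k, not_not.2 ⟨k, rfl⟩⟩).1 (h _)
      have h4 : e.symm ⟨a k, ⟨k, rfl⟩⟩ = k := e.symm_apply_apply k
      rwa [h4] at this

/-- Normal form of a nilpotent matrix relative to a labelling. -/
def RepNF {K ι : Type*} [Field K] [Fintype ι] [DecidableEq ι] (m r s : ℕ)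
    (N : Matrix ι ι K) : Prop :=
  ∃ c : ι → ℕ, (∀ i, c i < m) ∧
    (∀ j < m, Nat.card {i // c i = j} = r + if m ≤ s + j then 1 else 0) ∧
    ∃ L X : Matrix ι ι K, (∀ i j, ¬ c j < c i → L i j = (1 : Matrix ι ι K) i j) ∧
      (∀ i j, ¬ c i < c j → X i j = 0) ∧ N * L = L * X

theorem rep_det_one {R ι : Type*} [CommRing R] [Fintype ι] [DecidableEq ι] (c : ι → ℕ)
    (L : Matrix ι ι R) (hL : ∀ i j, ¬ c j < c i → L i j = (1 : Matrix ι ι R) i j) :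
    L.det = 1 := by
  have hbt : L.BlockTriangular (fun i => OrderDual.toDual (c i)) := by
    intro i j hij
    have hij' : c i < c j := hij
    rw [hL i j (by omega), Matrix.one_apply_ne]
    rintro rfl
    omega
  rw [hbt.det]
  refine Finset.prod_eq_one fun a _ => ?_
  have : L.toSquareBlock (fun i => OrderDual.toDual (c i)) a = 1 := by
    ext i j
    have h1 : c i.1 = c j.1 := OrderDual.toDual.injective (i.2.trans j.2.symm)
    rw [Matrix.toSquareBlock_def, Matrix.of_apply, hL _ _ (by omega)]
    simp [Matrix.one_apply, Subtype.ext_iff]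
  rw [this, Matrix.det_one]

theorem rep_nf_reindex {K ι κ : Type*} [Field K] [Fintype ι] [DecidableEq ι] [Fintype κ]
    [DecidableEq κ] (m r s : ℕ) (N : Matrix ι ι K) (e : κ ≃ ι)
    (h : RepNF m r s (N.submatrix e e)) : RepNF m r s N := by
  obtain ⟨c, hc, hcard, L, X, hL, hX, hN⟩ := h
  refine ⟨c ∘ e.symm, fun i => hc _, fun j hj => ?_, L.submatrix e.symm e.symm,
    X.submatrix e.symm e.symm, fun i j hij => ?_, fun i j hij => hX _ _ hij, ?_⟩
  · rw [← hcard j hj]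
    exact Nat.card_congr (e.symm.subtypeEquiv fun i => Iff.rfl)
  · rw [Matrix.submatrix_apply, hL _ _ hij]
    simp [Matrix.one_apply]
  · rw [Matrix.submatrix_mul_equiv, ← hN, ← Matrix.submatrix_mul_equiv _ _ _ e.symm]
    simp

theorem rep_nf_step {K S T : Type*} [Field K] [Fintype S] [DecidableEq S] [Fintype T]
    [DecidableEq T] (m r s : ℕ) (hs : s ≤ m + 1)
    (hT : Nat.card T = r + if 0 < s then 1 else 0)
    (N11 : Matrix S S K) (N12 : Matrix S T K) (B : Matrix T S K)
    (h : RepNF m r (s - 1) (N11 + N12 * B)) :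
    RepNF (m + 1) r s (Matrix.fromBlocks N11 N12 (B * N11) (B * N12)) := by
  obtain ⟨c, hc, hcard, L, X, hL, hX, hN⟩ := h
  have hdet := rep_det_one c L hL
  refine ⟨Sum.elim c (fun _ => m), ?_, ?_, Matrix.fromBlocks L 0 (B * L) 1,
    Matrix.fromBlocks X (L.adjugate * N12) 0 0, ?_, ?_, ?_⟩
  · rintro (i | i)
    · simpa using (hc i).trans (Nat.lt_succ_self m)
    · simp
  · intro j hj
    rw [Nat.card_congr (Equiv.subtypeSum (α := S) (β := T)), Nat.card_sum]
    simp only [Sum.elim_inl, Sum.elim_inr]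
    rcases Nat.lt_succ_iff_lt_or_eq.1 hj with hj | rfl
    · have : IsEmpty {b : T // m = j} := ⟨fun b => by have := b.2; omega⟩
      rw [hcard j hj, Nat.card_of_isEmpty]
      split_ifs <;> omega
    · have : IsEmpty {a : S // c a = j} := ⟨fun a => by have := a.2; have := hc a.1; omega⟩
      rw [Nat.card_of_isEmpty (α := {a : S // c a = j}),
        Nat.card_congr (Equiv.subtypeUnivEquiv fun _ => rfl), hT]
      split_ifs <;> omega
  · rintro (i | i) (j | j) hij
    · have := hL i j (by simpa using hij)
      simp [this, Matrix.one_apply]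
    · simp
    · have := hc j
      simp at hij
      omega
    · simp [Matrix.one_apply]
  · rintro (i | i) (j | j) hij
    · exact hX i j (by simpa using hij)
    · have := hc i
      simp at hij
      omega
    · simp
    · simp
  · rw [Matrix.fromBlocks_multiply, Matrix.fromBlocks_multiply]
    have hLL : L * L.adjugate = 1 := by rw [Matrix.mul_adjugate, hdet, one_smul]
    congr 1
    · rw [Matrix.zero_mul, add_zero, ← hN, add_mul, Matrix.mul_assoc N12]
    · rw [← Matrix.mul_assoc, hLL]; simp
    · rw [Matrix.mul_zero, add_zero, Matrix.mul_assoc B L X, ← hN, add_mul, Matrix.mul_add]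
      simp only [Matrix.mul_assoc]
    · rw [Matrix.mul_assoc B L, ← Matrix.mul_assoc L, hLL]; simp

theorem rep_nf {K : Type*} [Field K] (m : ℕ) : ∀ {ι : Type} [Fintype ι] [DecidableEq ι]
    (r s : ℕ) (_ : s ≤ m) (_ : Fintype.card ι = m * r + s) (N : Matrix ι ι K) (_ : N ^ m = 0),
    RepNF m r s N := by
  classical
  induction m with
  | zero =>
    intro ι _ _ r s hs hc N _
    have : IsEmpty ι := Fintype.card_eq_zero_iff.1 (by omega)
    exact ⟨fun _ => 0, fun i => isEmptyElim i, fun j hj => by omega, 1, 0,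
      fun i => isEmptyElim i, fun i => isEmptyElim i, by ext i; exact isEmptyElim i⟩
  | succ m ih =>
    intro ι _ _ r s hs hc N hN
    have hpow : ∀ k, (Matrix.toLin' N) ^ k = Matrix.toLin' (N ^ k) := fun k => by
      rw [Matrix.toLin'_pow]
    obtain ⟨W, hW1, hW2, hW3⟩ := rep_exists_W (Matrix.toLin' N) m r s
      (by rw [hpow, hN, map_zero])
      (by rw [Module.finrank_fintype_fun_eq_card, hc]) hs
    obtain ⟨p, B, hp, hB⟩ := rep_graph W
    apply rep_nf_reindex _ _ _ N (Equiv.sumCompl p)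
    have hblk := Matrix.fromBlocks_toBlocks (N.submatrix (Equiv.sumCompl p) (Equiv.sumCompl p))
    set N' := N.submatrix (Equiv.sumCompl p) (Equiv.sumCompl p) with hN'
    have hcol : ∀ j t, N t.1 j = ∑ s, B t s * N s.1 j := by
      intro j t
      have h1 : (fun i => N i j) ∈ W := by
        apply hW1
        refine ⟨Pi.single j 1, ?_⟩
        rw [Matrix.toLin'_apply, Matrix.mulVec_single_one]
        rfl
      have h2 := (hB _).1 h1 t
      rwa [finsum_eq_sum_of_fintype] at h2
    have h21 : N'.toBlocks₂₁ = B * N'.toBlocks₁₁ := by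
      ext t j
      rw [Matrix.mul_apply]
      exact hcol j.1 t
    have h22 : N'.toBlocks₂₂ = B * N'.toBlocks₁₂ := by
      ext t j
      rw [Matrix.mul_apply]
      exact hcol j.1 t
    rw [← hblk, h21, h22]
    have hcardp : Fintype.card {i // p i} = m * r + (s - 1) := by
      rw [← hW3, ← hp, Nat.card_eq_fintype_card]
    apply rep_nf_step m r s hs
    · have h1 := Fintype.card_subtype_compl p
      rw [Nat.card_eq_fintype_card, h1, hcardp, hc]
      have : (m + 1) * r = m * r + r := by ring
      split_ifs <;> omega
    apply ih r (s - 1) (by omega) hcardp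
    set n := N'.toBlocks₁₁ + N'.toBlocks₁₂ * B with hn
    -- the embedding of the graph
    let E : Matrix ({i // p i} ⊕ {i // ¬ p i}) {i // p i} K := Matrix.fromRows 1 B
    have hE : N' * E = E * n := by
      rw [← hblk, h21, h22]
      simp only [E]
      rw [Matrix.fromBlocks_mul_fromRows, Matrix.fromRows_mul]
      simp only [Matrix.mul_one, Matrix.one_mul, hn, Matrix.mul_add, Matrix.mul_assoc]
    have hEk : ∀ k, N' ^ k * E = E * n ^ k := by
      intro k
      induction k with
      | zero => simp
      | succ k ihk => rw [pow_succ, Matrix.mul_assoc, hE, ← Matrix.mul_assoc, ihk,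
          Matrix.mul_assoc, ← pow_succ]
    have hpow' : N' ^ m = (N ^ m).submatrix (Equiv.sumCompl p) (Equiv.sumCompl p) := by
      rw [hN']
      exact (map_pow (Matrix.reindexAlgEquiv K K (Equiv.sumCompl p).symm) N m).symm
    have hzero : N' ^ m * E = 0 := by
      ext i j
      have hmem : (fun i => E ((Equiv.sumCompl p).symm i) j) ∈ W := by
        rw [hB]
        intro t
        rw [finsum_eq_sum_of_fintype]
        simp [E, Matrix.one_apply]
      have h2 := hW2 hmem
      rw [LinearMap.mem_ker, hpow, Matrix.toLin'_apply] at h2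
      have h3 := congrFun h2 (Equiv.sumCompl p i)
      rw [hpow', Matrix.mul_apply, Matrix.zero_apply]
      rw [Matrix.mulVec, dotProduct, ← (Equiv.sumCompl p).sum_comp] at h3
      simpa using h3
    rw [hEk] at hzero
    ext i j
    have := congrFun (congrFun hzero (Sum.inl i)) j
    simpa [E, Matrix.fromRows_mul] using this

/-- Index type of the parameters. -/
abbrev RepP {ι : Type} (c : ι → ℕ) : Type := {p : ι × ι // c p.1 ≠ c p.2}

/-- Block unipotent lower triangular matrix with given parameters. -/
def repL {R : Type*} [CommRing R] {ι : Type} [DecidableEq ι] (c : ι → ℕ)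
    (y : RepP c → R) : Matrix ι ι R :=
  Matrix.of fun i j => if h : c j < c i then y ⟨(i, j), h.ne'⟩ else (1 : Matrix ι ι R) i j

/-- Block strictly upper triangular matrix with given parameters. -/
def repX {R : Type*} [CommRing R] {ι : Type} (c : ι → ℕ)
    (y : RepP c → R) : Matrix ι ι R :=
  Matrix.of fun i j => if h : c i < c j then y ⟨(i, j), h.ne⟩ else 0

/-- The nilpotent matrix with given parameters. -/
def repN {R : Type*} [CommRing R] {ι : Type} [Fintype ι] [DecidableEq ι] (c : ι → ℕ)
    (y : RepP c → R) : Matrix ι ι R :=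
  repL c y * repX c y * (repL c y).adjugate

theorem repL_map {R R' : Type*} [CommRing R] [CommRing R'] (f : R →+* R') {ι : Type}
    [DecidableEq ι] (c : ι → ℕ) (y : RepP c → R) :
    (repL c y).map f = repL c (fun q => f (y q)) := by
  ext i j
  simp only [repL, Matrix.map_apply, Matrix.of_apply, Matrix.one_apply]
  split_ifs <;> simp

theorem repX_map {R R' : Type*} [CommRing R] [CommRing R'] (f : R →+* R') {ι : Type}
    (c : ι → ℕ) (y : RepP c → R) :
    (repX c y).map f = repX c (fun q => f (y q)) := by
  ext i j
  simp only [repX, Matrix.map_apply, Matrix.of_apply]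
  split_ifs <;> simp

theorem rep_conj_map {R R' : Type*} [CommRing R] [CommRing R'] (f : R →+* R') {ι : Type}
    [Fintype ι] [DecidableEq ι] (g X : Matrix ι ι R) :
    (g * X * g.adjugate).map f = g.map f * X.map f * (g.map f).adjugate := by
  rw [Matrix.map_mul, Matrix.map_mul]
  congr 1
  exact f.map_adjugate g

theorem repN_map {R R' : Type*} [CommRing R] [CommRing R'] (f : R →+* R') {ι : Type}
    [Fintype ι] [DecidableEq ι] (c : ι → ℕ) (y : RepP c → R) :
    (repN c y).map f = repN c (fun q => f (y q)) := by
  rw [repN, rep_conj_map, repL_map, repX_map, repN]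

theorem repL_det {R : Type*} [CommRing R] {ι : Type} [Fintype ι] [DecidableEq ι] (c : ι → ℕ)
    (y : RepP c → R) : (repL c y).det = 1 := by
  apply rep_det_one c
  intro i j hij
  simp [repL, hij]

theorem repX_pow {R : Type*} [CommRing R] {ι : Type} [Fintype ι] [DecidableEq ι] (c : ι → ℕ)
    (y : RepP c → R) (k : ℕ) : ∀ i j, ¬ (c i + k ≤ c j) → ((repX c y) ^ k) i j = 0 := by
  induction k with
  | zero =>
    intro i j hij
    rw [pow_zero, Matrix.one_apply_ne]
    rintro rfl
    omega
  | succ k ih =>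
    intro i j hij
    rw [pow_succ, Matrix.mul_apply]
    refine Finset.sum_eq_zero fun l _ => ?_
    by_cases h : c i + k ≤ c l
    · have : ¬ c l < c j := by omega
      simp [repX, this]
    · rw [ih i l h, zero_mul]

theorem rep_conj_pow {R : Type*} [CommRing R] {ι : Type} [Fintype ι] [DecidableEq ι]
    (g X : Matrix ι ι R) (k : ℕ) :
    (g * X * g.adjugate) ^ (k + 1) = g.det ^ k • (g * X ^ (k + 1) * g.adjugate) := by
  induction k with
  | zero => simp
  | succ k ih =>
    rw [pow_succ, ih]
    have : g * X ^ (k + 1) * g.adjugate * (g * X * g.adjugate)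
      = g * X ^ (k + 1) * (g.adjugate * g) * X * g.adjugate := by
      simp only [Matrix.mul_assoc]
    rw [Matrix.smul_mul, this, Matrix.adjugate_mul]
    simp only [Matrix.mul_smul, Matrix.smul_mul, Matrix.mul_one, smul_smul]
    rw [Matrix.mul_assoc g (X ^ (k + 1)) X, ← pow_succ X, ← pow_succ]

theorem rep_conj_nil {R : Type*} [CommRing R] {ι : Type} [Fintype ι] [DecidableEq ι]
    (c : ι → ℕ) (hc : ∀ i, c i < 4) (g : Matrix ι ι R) (y : RepP c → R) :
    (g * repX c y * g.adjugate) ^ 4 = 0 := by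
  have : repX c y ^ (3 + 1) = 0 := by
    ext i j
    have := hc i
    have := hc j
    exact repX_pow c y 4 i j (by omega)
  rw [show 4 = 3 + 1 from rfl, rep_conj_pow, this]
  simp

/-- Admissible labellings. -/
def RepGood {ι : Type} (r s : ℕ) (c : ι → ℕ) : Prop :=
  (∀ i, c i < 4) ∧ ∀ j < 4, Nat.card {i // c i = j} = r + if 4 ≤ s + j then 1 else 0

theorem rep_exists_param {K : Type*} [Field K] {ι : Type} [Fintype ι] [DecidableEq ι]
    (r s : ℕ) (hs : s < 4) (hcard : Fintype.card ι = 4 * r + s) (N : Matrix ι ι K)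
    (hN : N ^ 4 = 0) :
    ∃ c : ι → ℕ, RepGood r s c ∧ ∃ y : RepP c → K, N = repN c y := by
  obtain ⟨c, hc, hcc, L, X, hL, hX, hNL⟩ := rep_nf 4 r s hs.le hcard N hN
  let y : RepP c → K := fun q => if c q.1.2 < c q.1.1 then L q.1.1 q.1.2 else X q.1.1 q.1.2
  have h1 : L = repL c y := by
    ext i j
    by_cases h : c j < c i
    · simp [repL, h, y]
    · simp [repL, h, hL]
  have h2 : X = repX c y := by
    ext i j
    by_cases h : c i < c j
    · simp [repX, h, y, h.le]
    · simp [repX, h, hX]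
  refine ⟨c, ⟨hc, hcc⟩, y, ?_⟩
  rw [repN, ← h1, ← h2, ← hNL, Matrix.mul_assoc, Matrix.mul_adjugate, h1, repL_det]
  simp

theorem rep_exists_conj {K : Type*} [Field K] {ι : Type} [Fintype ι] [DecidableEq ι]
    (r s : ℕ) (hs : s < 4) (hcard : Fintype.card ι = 4 * r + s) (c₀ : ι → ℕ)
    (hc₀ : RepGood r s c₀) (N : Matrix ι ι K) (hN : N ^ 4 = 0) :
    ∃ (g : Matrix ι ι K) (y : RepP c₀ → K), N = g * repX c₀ y * g.adjugate := by
  obtain ⟨c, hc, y, rfl⟩ := rep_exists_param r s hs hcard N hN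
  have hfib : ∀ j, Nonempty ({i // c₀ i = j} ≃ {i // c i = j}) := by
    intro j
    by_cases hj : j < 4
    · exact Finite.card_eq.1 (by rw [hc.2 j hj, hc₀.2 j hj])
    · have h1 : IsEmpty {i // c₀ i = j} :=
        ⟨fun i => by have := i.2; have := hc₀.1 i.1; omega⟩
      have h2 : IsEmpty {i // c i = j} :=
        ⟨fun i => by have := i.2; have := hc.1 i.1; omega⟩
      exact ⟨Equiv.equivOfIsEmpty _ _⟩
  let τ : ι ≃ ι := Equiv.ofFiberEquiv fun j => (hfib j).some
  have hτ : ∀ i, c (τ i) = c₀ i := fun i => Equiv.ofFiberEquiv_map _ i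
  have hLL : repL c y * (repL c y).adjugate = 1 := by
    rw [Matrix.mul_adjugate, repL_det, one_smul]
  set L := repL c y with hL
  set g := L.submatrix id τ with hg
  set h := L.adjugate.submatrix τ id with hh
  set X' := (repX c y).submatrix τ τ with hX'
  have hgh : g * h = 1 := by
    rw [hg, hh, Matrix.submatrix_mul_equiv, hLL, Matrix.submatrix_id_id]
  have hdet : g.det ≠ 0 := fun h0 => by
    have := congrArg Matrix.det hgh
    rw [Matrix.det_mul, h0, zero_mul, Matrix.det_one] at this
    exact zero_ne_one this
  have hadj : g.adjugate = g.det • h := by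
    have h1 : g.adjugate * (g * h) = g.det • h := by
      rw [← Matrix.mul_assoc, Matrix.adjugate_mul, Matrix.smul_mul, Matrix.one_mul]
    rw [← h1, hgh, Matrix.mul_one]
  refine ⟨g, fun q => g.det⁻¹ * X' q.1.1 q.1.2, ?_⟩
  have hX : repX c₀ (fun q => g.det⁻¹ * X' q.1.1 q.1.2) = g.det⁻¹ • X' := by
    ext i j
    by_cases h : c₀ i < c₀ j
    · simp [repX, h]
    · simp [repX, h, hX', hτ]
  rw [hX, hadj, Matrix.mul_smul, Matrix.mul_smul, Matrix.smul_mul, smul_smul,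
    mul_inv_cancel₀ hdet, one_smul, hg, hh, hX', Matrix.submatrix_mul_equiv,
    Matrix.submatrix_mul_equiv, Matrix.submatrix_id_id, repN]

/-- The comorphism of the parametrization. -/
def repPhi (K : Type*) [Field K] {ι : Type} [Fintype ι] [DecidableEq ι] (κ : Type)
    (c : ι → ℕ) : MvPolynomial ((ι × ι) ⊕ κ) K →ₐ[K] MvPolynomial (RepP c ⊕ κ) K :=
  MvPolynomial.aeval (Sum.elim
    (fun p => repN c (fun q => (MvPolynomial.X (Sum.inl q) : MvPolynomial (RepP c ⊕ κ) K)) p.1 p.2)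
    (fun q => MvPolynomial.X (Sum.inr q)))

theorem repPhi_eval (K : Type*) [Field K] {ι : Type} [Fintype ι] [DecidableEq ι] (κ : Type)
    (c : ι → ℕ) (f : MvPolynomial ((ι × ι) ⊕ κ) K) (y : RepP c ⊕ κ → K) :
    MvPolynomial.eval y (repPhi K κ c f) =
      MvPolynomial.eval (Sum.elim (fun p => repN c (fun q => y (Sum.inl q)) p.1 p.2)
        (fun q => y (Sum.inr q))) f := by
  rw [repPhi, ← MvPolynomial.aeval_eq_eval, ← MvPolynomial.aeval_eq_eval,
    ← AlgHom.comp_apply, MvPolynomial.comp_aeval]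
  congr 2
  funext p
  rcases p with p | q
  · have := repN_map (MvPolynomial.eval y) c
      (fun q => (MvPolynomial.X (Sum.inl q) : MvPolynomial (RepP c ⊕ κ) K))
    simp only [MvPolynomial.eval_X] at this
    rw [← this]
    simp [MvPolynomial.aeval_eq_eval]
  · simp

/-- The comorphism of the conjugation map. -/
def repPi (K : Type*) [Field K] {ι : Type} [Fintype ι] [DecidableEq ι] (κ : Type)
    (c : ι → ℕ) : MvPolynomial ((ι × ι) ⊕ κ) K →ₐ[K]
      MvPolynomial ((ι × ι) ⊕ (RepP c ⊕ κ)) K :=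
  MvPolynomial.aeval (Sum.elim
    (fun p => ((Matrix.of fun i j => (MvPolynomial.X (Sum.inl (i, j)) :
        MvPolynomial ((ι × ι) ⊕ (RepP c ⊕ κ)) K)) *
      repX c (fun q => MvPolynomial.X (Sum.inr (Sum.inl q))) *
      (Matrix.of fun i j => (MvPolynomial.X (Sum.inl (i, j)) :
        MvPolynomial ((ι × ι) ⊕ (RepP c ⊕ κ)) K)).adjugate : Matrix ι ι _) p.1 p.2)
    (fun q => MvPolynomial.X (Sum.inr (Sum.inr q))))

theorem repPi_eval (K : Type*) [Field K] {ι : Type} [Fintype ι] [DecidableEq ι] (κ : Type)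
    (c : ι → ℕ) (f : MvPolynomial ((ι × ι) ⊕ κ) K) (z : (ι × ι) ⊕ (RepP c ⊕ κ) → K) :
    MvPolynomial.eval z (repPi K κ c f) =
      MvPolynomial.eval (Sum.elim (fun p => ((Matrix.of fun i j => z (Sum.inl (i, j))) *
        repX c (fun q => z (Sum.inr (Sum.inl q))) *
        (Matrix.of fun i j => z (Sum.inl (i, j))).adjugate) p.1 p.2)
        (fun q => z (Sum.inr (Sum.inr q)))) f := by
  rw [repPi, ← MvPolynomial.aeval_eq_eval, ← MvPolynomial.aeval_eq_eval,
    ← AlgHom.comp_apply, MvPolynomial.comp_aeval]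
  congr 2
  funext p
  rcases p with p | q
  · have := rep_conj_map (MvPolynomial.eval z)
      (Matrix.of fun i j => (MvPolynomial.X (Sum.inl (i, j)) :
        MvPolynomial ((ι × ι) ⊕ (RepP c ⊕ κ)) K))
      (repX c (fun q => MvPolynomial.X (Sum.inr (Sum.inl q))))
    rw [repX_map] at this
    have h2 : (Matrix.of fun i j => (MvPolynomial.X (Sum.inl (i, j)) :
        MvPolynomial ((ι × ι) ⊕ (RepP c ⊕ κ)) K)).map (MvPolynomial.eval z)
        = Matrix.of fun i j => z (Sum.inl (i, j)) := by
      ext i j; simp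
    simp only [MvPolynomial.eval_X, h2] at this
    rw [← this]
    simp only [Sum.elim_inl, Matrix.map_apply, MvPolynomial.aeval_eq_eval]
  · simp

theorem rep_exists_c {K : Type*} [Field K] [Infinite K] {ι : Type} [Fintype ι]
    [DecidableEq ι] (κ : Type) [Fintype κ]
    (r s : ℕ) (hs : s < 4) (hcard : Fintype.card ι = 4 * r + s) :
    ∃ c : ι → ℕ, RepGood r s c ∧ ∀ f : MvPolynomial ((ι × ι) ⊕ κ) K, repPhi K κ c f = 0 ↔
      ∀ x : (ι × ι) ⊕ κ → K, (Matrix.of fun i j => x (Sum.inl (i, j))) ^ 4 = 0 →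
        MvPolynomial.eval x f = 0 := by
  classical
  by_contra hcon
  push Not at hcon
  have hback : ∀ c : ι → ℕ, RepGood r s c → ∀ f : MvPolynomial ((ι × ι) ⊕ κ) K,
      (∀ x : (ι × ι) ⊕ κ → K, (Matrix.of fun i j => x (Sum.inl (i, j))) ^ 4 = 0 →
        MvPolynomial.eval x f = 0) → repPhi K κ c f = 0 := by
    intro c hc f hf
    apply MvPolynomial.funext
    intro y
    rw [repPhi_eval, map_zero]
    apply hf
    exact rep_conj_nil c hc.1 _ _
  have hex : ∀ c : ι → ℕ, ∃ f : MvPolynomial ((ι × ι) ⊕ κ) K, RepGood r s c →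
      repPhi K κ c f = 0 ∧ ∃ x : (ι × ι) ⊕ κ → K,
        (Matrix.of fun i j => x (Sum.inl (i, j))) ^ 4 = 0 ∧ MvPolynomial.eval x f ≠ 0 := by
    intro c
    by_cases hc : RepGood r s c
    · obtain ⟨f, hf⟩ := hcon c hc
      rcases hf with ⟨h1, h2⟩ | ⟨h1, h2⟩
      · exact ⟨f, fun _ => ⟨h1, h2⟩⟩
      · exact absurd (hback c hc f h2) h1
    · exact ⟨0, fun h => absurd h hc⟩
  choose f hf using hex
  let C : Finset (ι → ℕ) := (Fintype.piFinset fun _ => Finset.range 4).filter (RepGood r s)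
  have hC : ∀ c, c ∈ C ↔ RepGood r s c := by
    intro c
    simp only [C, Finset.mem_filter, Fintype.mem_piFinset, Finset.mem_range]
    exact ⟨fun h => h.2, fun h => ⟨h.1, h⟩⟩
  obtain ⟨c₀, hc₀, -⟩ := rep_exists_param (K := K) r s hs hcard 0 (by simp)
  have hvan : ∀ x : (ι × ι) ⊕ κ → K, (Matrix.of fun i j => x (Sum.inl (i, j))) ^ 4 = 0 →
      MvPolynomial.eval x (∏ c ∈ C, f c) = 0 := by
    intro x hx
    obtain ⟨c, hc, y, hy⟩ := rep_exists_param r s hs hcard _ hx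
    rw [map_prod]
    apply Finset.prod_eq_zero ((hC c).2 hc)
    have h1 := repPhi_eval K κ c (f c) (Sum.elim y (fun q => x (Sum.inr q)))
    rw [(hf c hc).1, map_zero] at h1
    rw [h1]
    congr 2
    funext p
    rcases p with p | q
    · exact congrFun (congrFun hy p.1) p.2
    · rfl
  have hpi : repPi K κ c₀ (∏ c ∈ C, f c) = 0 := by
    apply MvPolynomial.funext
    intro z
    rw [repPi_eval, map_zero]
    apply hvan
    exact rep_conj_nil c₀ hc₀.1 _ _
  rw [map_prod, Finset.prod_eq_zero_iff] at hpi
  obtain ⟨c, hcC, hc⟩ := hpi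
  obtain ⟨-, x, hx, hne⟩ := hf c ((hC c).1 hcC)
  apply hne
  obtain ⟨g, y, hy⟩ := rep_exists_conj r s hs hcard c₀ hc₀ _ hx
  have h1 := repPi_eval K κ c₀ (f c)
    (Sum.elim (fun p => g p.1 p.2) (Sum.elim y (fun q => x (Sum.inr q))))
  rw [hc, map_zero] at h1
  rw [h1]
  congr 2
  funext p
  rcases p with p | q
  · exact congrFun (congrFun hy p.1) p.2
  · rfl

theorem rep_exists_up {ι : Type} [Fintype ι] (r s : ℕ) (c : ι → ℕ)
    (hc : RepGood r s c) : ∃ up : ι → ι, (∀ i, c i < 3 → c (up i) = c i + 1) ∧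
      ∀ i j, c i < 3 → c i = c j → up i = up j → i = j := by
  classical
  have h : ∀ a : ℕ, ∃ g : {i // c i = a} → ι, a < 3 →
      (∀ i, c (g i) = a + 1) ∧ Function.Injective g := by
    intro a
    by_cases ha : a < 3
    · have h1 := hc.2 a (by omega)
      have h2 := hc.2 (a + 1) (by omega)
      have h3 : Fintype.card {i // c i = a} ≤ Fintype.card {i // c i = a + 1} := by
        rw [← Nat.card_eq_fintype_card, ← Nat.card_eq_fintype_card, h1, h2]
        split_ifs <;> omega
      obtain ⟨e⟩ := Function.Embedding.nonempty_of_card_le h3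
      exact ⟨fun i => (e i).1, fun _ => ⟨fun i => (e i).2,
        fun i j hij => e.injective (Subtype.ext hij)⟩⟩
    · exact ⟨fun i => i.1, fun h => absurd h ha⟩
  choose g hg using h
  refine ⟨fun i => g (c i) ⟨i, rfl⟩, fun i hi => (hg _ hi).1 _, ?_⟩
  intro i j hi hij hup
  have key : ∀ a (h : c j = a), g (c j) ⟨j, rfl⟩ = g a ⟨j, h⟩ := by
    rintro a rfl; rfl
  simp only [key (c i) hij.symm] at hup
  have := (hg _ hi).2 hup
  exact congrArg Subtype.val this

/-- The base point of the slice. -/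
def repX0 (K : Type*) [Field K] {ι : Type} [DecidableEq ι] (c : ι → ℕ) (up : ι → ι) :
    Matrix ι ι K :=
  Matrix.of fun l j => if c l < 3 ∧ j = up l then 1 else 0

theorem rep_tangent {K : Type*} [Field K] {ι : Type} [Fintype ι] [DecidableEq ι]
    (c : ι → ℕ) (hc : ∀ i, c i < 4) (up : ι → ι) (h1 : ∀ i, c i < 3 → c (up i) = c i + 1)
    (h2 : ∀ i j, c i < 3 → c i = c j → up i = up j → i = j)
    (Z Y : Matrix ι ι K) (hZ : ∀ i j, ¬ c j < c i → Z i j = 0)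
    (hY : ∀ i j, ¬ c i < c j → Y i j = 0)
    (h : repX0 K c up * Z = Z * repX0 K c up + Y) : Z = 0 ∧ Y = 0 := by
  have hL : ∀ i j, (repX0 K c up * Z) i j = if c i < 3 then Z (up i) j else 0 := by
    intro i j
    rw [Matrix.mul_apply]
    by_cases hi : c i < 3
    · simp [repX0, hi]
    · simp [repX0, hi]
  have hR : ∀ i l, c l < 3 → (Z * repX0 K c up) i (up l) = Z i l := by
    intro i l hl
    rw [Matrix.mul_apply, Finset.sum_eq_single l]
    · simp [repX0, hl]
    · intro l' _ hne
      have : ¬ (c l' < 3 ∧ up l = up l') := by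
        rintro ⟨h3, h4⟩
        have h5 := h1 l hl
        have h6 := h1 l' h3
        rw [h4] at h5
        exact hne (h2 l' l h3 (by omega) h4.symm)
      simp [repX0, this]
    · simp
  have hz : ∀ k, ∀ i l, c i + k = 3 → Z i l = 0 := by
    intro k
    induction k with
    | zero =>
      intro i l hi
      by_cases hil : c l < c i
      · have hl : c l < 3 := by omega
        have h3 := congrFun (congrFun h i) (up l)
        rw [Matrix.add_apply, hL, hR i l hl, hY i (up l) (by rw [h1 l hl]; omega),
          if_neg (by omega), add_zero] at h3
        exact h3.symm
      · exact hZ i l hil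
    | succ k ih =>
      intro i l hi
      by_cases hil : c l < c i
      · have hl : c l < 3 := by omega
        have hi3 : c i < 3 := by omega
        have h3 := congrFun (congrFun h i) (up l)
        rw [Matrix.add_apply, hL, hR i l hl, hY i (up l) (by rw [h1 l hl]; omega),
          if_pos hi3, add_zero, ih (up i) (up l) (by rw [h1 i hi3]; omega)] at h3
        exact h3.symm
      · exact hZ i l hil
  have hZ0 : Z = 0 := by
    ext i l
    have := hc i
    exact hz (3 - c i) i l (by omega)
  refine ⟨hZ0, ?_⟩
  rw [hZ0] at h
  simpa using h.symm

/-- Directional derivative at a point. -/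
def repD {K τ : Type*} [Field K] [Fintype τ] (v y : τ → K) (f : MvPolynomial τ K) : K :=
  ∑ p, MvPolynomial.eval y (MvPolynomial.pderiv p f) * v p

theorem repD_mul {K τ : Type*} [Field K] [Fintype τ] (v y : τ → K) (f g : MvPolynomial τ K) :
    repD v y (f * g) = repD v y f * MvPolynomial.eval y g
      + MvPolynomial.eval y f * repD v y g := by
  simp only [repD, Finset.sum_mul, Finset.mul_sum, ← Finset.sum_add_distrib]
  refine Finset.sum_congr rfl fun p _ => ?_
  rw [Derivation.leibniz]
  simp only [smul_eq_mul, map_add, map_mul]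
  ring

theorem repD_sum {K τ α : Type*} [Field K] [Fintype τ] (v y : τ → K) (t : Finset α)
    (f : α → MvPolynomial τ K) : repD v y (∑ a ∈ t, f a) = ∑ a ∈ t, repD v y (f a) := by
  simp only [repD, map_sum, Finset.sum_mul]
  exact Finset.sum_comm

theorem repD_X {K τ : Type*} [Field K] [Fintype τ] (v y : τ → K) (p : τ) :
    repD v y (MvPolynomial.X p) = v p := by
  classical
  simp only [repD, MvPolynomial.pderiv_X]
  rw [Finset.sum_eq_single p]
  · simp
  · intro q _ hq
    simp [hq]
  · simp

theorem repD_matmul {K τ ι : Type*} [Field K] [Fintype τ] [Fintype ι] (v y : τ → K)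
    (A B : Matrix ι ι (MvPolynomial τ K)) :
    (A * B).map (repD v y) = A.map (repD v y) * B.map (MvPolynomial.eval y)
      + A.map (MvPolynomial.eval y) * B.map (repD v y) := by
  ext i j
  simp only [Matrix.map_apply, Matrix.mul_apply, Matrix.add_apply, repD_sum, repD_mul,
    Finset.sum_add_distrib]

theorem rep_jac_inj {K : Type*} [Field K] {ι : Type} [Fintype ι] [DecidableEq ι]
    (κ : Type) [Fintype κ] (r s : ℕ) (c : ι → ℕ) (hc : RepGood r s c) :
    ∃ y : RepP c ⊕ κ → K, ∀ v : RepP c ⊕ κ → K,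
      (∀ q, repD v y (repPhi K κ c (MvPolynomial.X q)) = 0) → v = 0 := by
  obtain ⟨up, h1, h2⟩ := rep_exists_up r s c hc
  refine ⟨Sum.elim (fun q => repX0 K c up q.1.1 q.1.2) (fun _ => 0), fun v hv => ?_⟩
  set y : RepP c ⊕ κ → K := Sum.elim (fun q => repX0 K c up q.1.1 q.1.2) (fun _ => 0) with hy
  let xx : RepP c → MvPolynomial (RepP c ⊕ κ) K := fun q => MvPolynomial.X (Sum.inl q)
  have hNL : repN c xx * repL c xx = repL c xx * repX c xx := by
    rw [repN, Matrix.mul_assoc, Matrix.adjugate_mul, repL_det, one_smul, Matrix.mul_one]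
  have hx0 : ∀ i j, ¬ c i < c j → repX0 K c up i j = 0 := by
    intro i j hij
    have : ¬ (c i < 3 ∧ j = up i) := by
      rintro ⟨h3, rfl⟩
      rw [h1 i h3] at hij
      omega
    simp [repX0, this]
  have heX : (repX c xx).map (MvPolynomial.eval y) = repX0 K c up := by
    rw [repX_map]
    ext i j
    by_cases h : c i < c j
    · simp [repX, h, xx, hy]
    · simp [repX, h, hx0]
  have heL : (repL c xx).map (MvPolynomial.eval y) = 1 := by
    rw [repL_map]
    ext i j
    by_cases h : c j < c i
    · have h3 : i ≠ j := by rintro rfl; omega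
      simp [repL, h, xx, hy, hx0 i j (by omega), h3]
    · simp [repL, h]
  have heN : (repN c xx).map (MvPolynomial.eval y) = repX0 K c up := by
    rw [repN, rep_conj_map, heL, heX]
    simp
  have hDN : (repN c xx).map (repD v y) = 0 := by
    ext i j
    have := hv (Sum.inl (i, j))
    rw [repPhi, MvPolynomial.aeval_X] at this
    exact this
  have hkey := congrArg (fun A => A.map (repD v y)) hNL
  simp only [repD_matmul, hDN, heL, heX, heN, zero_mul, zero_add, Matrix.one_mul] at hkey
  have hD0 : repD v y 0 = 0 := by simp [repD]
  have hD1 : repD v y 1 = 0 := by simp [repD]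
  obtain ⟨hZ, hY⟩ := rep_tangent c hc.1 up h1 h2 _ _ (by
    intro i j hij
    simp only [repL, Matrix.map_apply, Matrix.of_apply, hij, dite_false, Matrix.one_apply]
    split_ifs
    · exact hD1
    · exact hD0) (by
    intro i j hij
    simp only [repX, Matrix.map_apply, Matrix.of_apply, hij, dite_false]
    exact hD0) hkey
  funext p
  rcases p with ⟨⟨i, j⟩, hij⟩ | q
  · rcases lt_or_gt_of_ne hij with h | h
    · have h3 := congrFun (congrFun hY i) j
      have h4 : c i < c j := h
      simpa [repX, h4, xx, repD_X] using h3
    · have h3 := congrFun (congrFun hZ i) j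
      have h4 : c j < c i := h
      simpa [repL, h4, xx, repD_X] using h3
  · have := hv (Sum.inr q)
    rw [repPhi, MvPolynomial.aeval_X] at this
    simpa [repD_X] using this

theorem rep_phi_algInd {K : Type*} [Field K] [CharZero K] {ι : Type} [Fintype ι] [DecidableEq ι]
    (κ : Type) [Fintype κ] (r s : ℕ) (c : ι → ℕ) (hc : RepGood r s c) :
    ∃ g : RepP c ⊕ κ → MvPolynomial ((ι × ι) ⊕ κ) K,
      AlgebraicIndependent K fun p => repPhi K κ c (g p) := by
  classical
  obtain ⟨y, hy⟩ := rep_jac_inj (K := K) κ r s c hc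
  let J : Matrix ((ι × ι) ⊕ κ) (RepP c ⊕ κ) K := Matrix.of fun q p =>
    MvPolynomial.eval y (MvPolynomial.pderiv p (repPhi K κ c (MvPolynomial.X q)))
  have hker : LinearMap.ker (Matrix.toLin' J) = ⊥ := by
    rw [LinearMap.ker_eq_bot']
    intro v hv
    apply hy
    intro q
    exact congrFun hv q
  obtain ⟨j', hj'⟩ := (Matrix.toLin' J).exists_leftInverse_of_injective hker
  let J' := LinearMap.toMatrix' j'
  have hJJ : J' * J = 1 := by
    have := congrArg LinearMap.toMatrix' hj'
    rwa [LinearMap.toMatrix'_comp, LinearMap.toMatrix'_toLin', LinearMap.toMatrix'_id] at this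
  refine ⟨fun p => ∑ q, MvPolynomial.C (J' p q) * MvPolynomial.X q, ?_⟩
  apply rep_algInd _ y
  intro p p'
  have h1 : repPhi K κ c (∑ q, MvPolynomial.C (J' p' q) * MvPolynomial.X q)
      = ∑ q, J' p' q • repPhi K κ c (MvPolynomial.X q) := by
    rw [map_sum]
    refine Finset.sum_congr rfl fun q _ => ?_
    rw [← MvPolynomial.smul_eq_C_mul, map_smul]
  rw [h1, map_sum, map_sum]
  have h2 := congrFun (congrFun hJJ p') p
  rw [Matrix.mul_apply, Matrix.one_apply] at h2
  simp only [eq_comm (a := p)]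
  rw [← h2]
  refine Finset.sum_congr rfl fun q _ => ?_
  rw [Derivation.map_smul, MvPolynomial.smul_eval]
  rfl

theorem rep_card_P {ι : Type} [Fintype ι] (r s : ℕ) (hs : s < 4)
    (hcard : Fintype.card ι = 4 * r + s) (c : ι → ℕ) (hc : RepGood r s c) [Fintype (RepP c)] :
    Fintype.card (RepP c) + (4 * r ^ 2 + 2 * s * r + s) = Fintype.card ι ^ 2 := by
  classical
  have h0 : Fintype.card {p : ι × ι // c p.1 = c p.2} + Fintype.card (RepP c)
      = Fintype.card ι ^ 2 := by
    rw [← Fintype.card_sum, Fintype.card_congr (Equiv.sumCompl fun p : ι × ι => c p.1 = c p.2),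
      Fintype.card_prod, sq]
  have h1 : Fintype.card {p : ι × ι // c p.1 = c p.2} = 4 * r ^ 2 + 2 * s * r + s := by
    rw [Fintype.card_subtype, Finset.card_eq_sum_card_fiberwise (f := fun p => c p.1)
      (t := Finset.range 4) (fun p _ => by simpa using hc.1 p.1)]
    have h2 : ∀ a ∈ Finset.range 4, (Finset.filter (fun p : ι × ι => c p.1 = a)
        (Finset.filter (fun p : ι × ι => c p.1 = c p.2) Finset.univ)).card
        = (r + if 4 ≤ s + a then 1 else 0) ^ 2 := by
      intro a ha
      rw [← hc.2 a (Finset.mem_range.1 ha), Nat.card_eq_fintype_card, Fintype.card_subtype, sq,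
        ← Finset.card_product]
      congr 1
      ext p
      simp only [Finset.mem_filter, Finset.mem_univ, true_and, Finset.mem_product]
      omega
    rw [Finset.sum_congr rfl h2]
    simp only [Finset.sum_range_succ, Finset.sum_range_zero]
    interval_cases s <;> norm_num <;> ring
  omega

/-- For H = KQ/(ε⁴) of type 𝔹ℂ̃₁ and a dimension vector d = (d₁,d₂)
with d₁ = 4r + s, 0 ≤ s < 4, the representation variety
Rep(H,d) = {(N,M) ∈ Mat_{d₁×d₁} × Mat_{d₁×d₂} | N⁴ = 0}
(coordinatized as affine space over the index set (Fin d₁ × Fin d₁) ⊕ (Fin d₁ × Fin d₂),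
with N the first component) is irreducible and of dimension
d₁d₂ + d₁² − 4r² − 2sr − s (topological Krull dimension in the Zariski topology). -/
theorem stmt_10 [IsAlgClosed K] [CharZero K] (d1 d2 r s : ℕ)
    (hd : d1 = 4 * r + s) (hs : s < 4) :
    letI := zariskiAff K ((Fin d1 × Fin d1) ⊕ (Fin d1 × Fin d2))
    IsIrreducible {x : ((Fin d1 × Fin d1) ⊕ (Fin d1 × Fin d2)) → K |
        (Matrix.of fun i j => x (Sum.inl (i, j))) ^ 4 = 0} ∧
    topologicalKrullDim {x : ((Fin d1 × Fin d1) ⊕ (Fin d1 × Fin d2)) → K |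
        (Matrix.of fun i j => x (Sum.inl (i, j))) ^ 4 = 0}
      = ((d1 * d2 + d1 ^ 2 - (4 * r ^ 2 + 2 * s * r + s) : ℕ) : ℕ∞) := by
  have hcard : Fintype.card (Fin d1) = 4 * r + s := by rw [Fintype.card_fin, hd]
  obtain ⟨c, hc, hker⟩ := rep_exists_c (K := K) (ι := Fin d1) (Fin d1 × Fin d2) r s hs hcard
  have hprime : (RingHom.ker (repPhi K (Fin d1 × Fin d2) c)).IsPrime := RingHom.ker_isPrime _
  have hV : {x : ((Fin d1 × Fin d1) ⊕ (Fin d1 × Fin d2)) → K |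
        (Matrix.of fun i j => x (Sum.inl (i, j))) ^ 4 = 0} =
      MvPolynomial.zeroLocus K (RingHom.ker (repPhi K (Fin d1 × Fin d2) c)) := by
    ext x
    constructor
    · intro hx f hf
      rw [MvPolynomial.aeval_eq_eval]
      exact (hker f).1 hf x hx
    · intro hx
      let M : Matrix (Fin d1) (Fin d1)
          (MvPolynomial ((Fin d1 × Fin d1) ⊕ (Fin d1 × Fin d2)) K) :=
        Matrix.of fun i j => MvPolynomial.X (Sum.inl (i, j))
      have hM : ∀ z : ((Fin d1 × Fin d1) ⊕ (Fin d1 × Fin d2)) → K, ∀ i j,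
          MvPolynomial.eval z ((M ^ 4) i j)
            = ((Matrix.of fun i j => z (Sum.inl (i, j))) ^ 4 : Matrix (Fin d1) (Fin d1) K) i j := by
        intro z i j
        have h1 : M.map (MvPolynomial.eval z) = Matrix.of fun i j => z (Sum.inl (i, j)) := by
          ext i j; simp [M]
        rw [← h1]
        exact congrFun (congrFun (map_pow (MvPolynomial.eval z).mapMatrix M 4) i) j
      change (Matrix.of fun i j => x (Sum.inl (i, j))) ^ 4 = 0
      ext i j
      rw [← hM, Matrix.zero_apply]
      have h2 := hx ((M ^ 4) i j) ((hker _).2 fun z hz => by rw [hM, hz, Matrix.zero_apply])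
      rwa [MvPolynomial.aeval_eq_eval] at h2
  refine ⟨?_, ?_⟩
  · rw [hV]
    exact rep_zar_prime_irr _
  · refine (rep_zar_dim (RingHom.ker (repPhi K (Fin d1 × Fin d2) c)) _ hV).trans ?_
    obtain ⟨g, hg⟩ := rep_phi_algInd (K := K) (Fin d1 × Fin d2) r s c hc
    let ψ := Ideal.kerLiftAlg (repPhi K (Fin d1 × Fin d2) c)
    have hψ : Function.Injective ψ := Ideal.kerLiftAlg_injective _
    have hx : AlgebraicIndependent K fun p => Ideal.Quotient.mk
        (RingHom.ker (repPhi K (Fin d1 × Fin d2) c)) (g p) := by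
      exact AlgebraicIndependent.of_comp ψ hg
    rw [rep_dim_eq _ hx ψ hψ]
    congr 2
    have h3 := rep_card_P r s hs hcard c hc
    rw [Fintype.card_fin] at h3
    rw [Fintype.card_sum, Fintype.card_prod, Fintype.card_fin, Fintype.card_fin]
    omega

end
end
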